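/- (Siegel's formula, degree 1.) Let m be a positive integer divisible by 8. Call two positive definite even unimodular m×m matrices S, S' equivalent if S' = UᵀSU for some U ∈ GL_m(ℤ), and for such S let g_S = #{U ∈ GL_m(ℤ) : UᵀSU = S} (a finite number). Let R be a finite set of positive definite even unimodular m×m matrices containing exactly one member of each equivalence class, and set M_m = Σ_{S∈R} 1/g_S. Then for all τ in the upper half-plane ℍ: Σ_{S∈R} (1/g_S)·θ_S(τ) = M_m·E_{m/2}(τ), where E_{m/2}(τ) = Σ_{γ ∈ Γ∞\SL₂(ℤ)} j(γ,τ)^{−m/2}. -/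

import Mathlib

open Complex Real Set
open scoped MatrixGroups Matrix

noncomputable section

/-- The upper half-plane, as a subset of `ℂ`. -/
def UHP : Set ℂ := {τ | 0 < τ.im}

/-- The subgroup `Γ∞ = {(a b; 0 d) ∈ SL₂(ℤ)}` of upper triangular matrices. -/
def GammaInf : Subgroup SL(2, ℤ) where
  carrier := {γ | γ.1 1 0 = 0}
  one_mem' := by simp
  mul_mem' := by
    intro x y hx hy
    have h := (Matrix.two_mul_expl x.1 y.1).2.2.1
    simp only [Set.mem_setOf_eq] at *
    simp [Matrix.SpecialLinearGroup.coe_mul, h, hx, hy]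
  inv_mem' := by
    intro x hx
    simp only [Set.mem_setOf_eq] at *
    rw [Matrix.SpecialLinearGroup.SL2_inv_expl x]
    simpa using hx

/-- The square `j(γ,τ)² = (cτ+d)²` of the automorphy factor, as a well-defined function on
the set `Γ∞\SL₂(ℤ)` of right cosets `Γ∞γ` (it is insensitive to the sign ambiguity
`(c,d) ↦ (-c,-d)` coming from left multiplication by `Γ∞`). -/
def jsq (τ : ℂ) : Quotient (QuotientGroup.rightRel GammaInf) → ℂ :=
  Quotient.lift
    (fun γ : SL(2, ℤ) => (((γ.1 1 0 : ℤ) : ℂ) * τ + ((γ.1 1 1 : ℤ) : ℂ)) ^ 2)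
    (by
      intro x y hxy
      have h : y * x⁻¹ ∈ GammaInf := QuotientGroup.rightRel_apply.mp hxy
      set η : SL(2, ℤ) := y * x⁻¹ with hη
      have hyx : y = η * x := by rw [hη]; group
      have hη10 : η.1 1 0 = 0 := h
      have h10 : y.1 1 0 = η.1 1 1 * x.1 1 0 := by
        have h2 := (Matrix.two_mul_expl η.1 x.1).2.2.1
        rw [hyx]
        simp only [Matrix.SpecialLinearGroup.coe_mul]
        rw [h2, hη10]; ring
      have h11 : y.1 1 1 = η.1 1 1 * x.1 1 1 := by
        have h2 := (Matrix.two_mul_expl η.1 x.1).2.2.2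
        rw [hyx]
        simp only [Matrix.SpecialLinearGroup.coe_mul]
        rw [h2, hη10]; ring
      have hdet : η.1 0 0 * η.1 1 1 = 1 := by
        have hd := η.2
        rw [Matrix.det_fin_two] at hd
        rw [hη10] at hd; linarith
      have hsq : (((η.1 1 1 : ℤ) : ℂ)) ^ 2 = 1 := by
        have hdet' : η.1 1 1 * η.1 0 0 = 1 := by linarith
        rcases Int.eq_one_or_neg_one_of_mul_eq_one hdet' with h1 | h1 <;>
          rw [h1] <;> norm_num
      have hkey : ((y.1 1 0 : ℤ) : ℂ) * τ + ((y.1 1 1 : ℤ) : ℂ)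
          = ((η.1 1 1 : ℤ) : ℂ) * (((x.1 1 0 : ℤ) : ℂ) * τ + ((x.1 1 1 : ℤ) : ℂ)) := by
        rw [h10, h11]; push_cast; ring
      show (((x.1 1 0 : ℤ) : ℂ) * τ + ((x.1 1 1 : ℤ) : ℂ)) ^ 2
          = (((y.1 1 0 : ℤ) : ℂ) * τ + ((y.1 1 1 : ℤ) : ℂ)) ^ 2
      rw [hkey, mul_pow, hsq, one_mul])

/-- The weight-`w` Eisenstein series `E_w(τ) = ∑_{γ ∈ Γ∞\SL₂(ℤ)} j(γ,τ)^{-w}`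
(for even `w`, written via `j(γ,τ)^{-w} = (j(γ,τ)²)^{-w/2}`). -/
def Ewt (w : ℕ) (τ : ℂ) : ℂ :=
  ∑' q : Quotient (QuotientGroup.rightRel GammaInf), jsq τ q ^ (-((w : ℤ) / 2))


/-- `S ∈ M_m(ℤ)` is positive definite even unimodular: symmetric, positive definite (as a
real matrix), of determinant one, with all diagonal entries even. -/
def IsPosDefEvenUnimodular {m : ℕ} (S : Matrix (Fin m) (Fin m) ℤ) : Prop :=
  S.IsSymm ∧ (S.map ((↑) : ℤ → ℝ)).PosDef ∧ S.det = 1 ∧ ∀ i, Even (S i i)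

/-- The theta series `θ_S(τ) = ∑_{x ∈ ℤ^m} e^{πiτ xᵀSx}` of an integral matrix `S`. -/
def thetaSeries {m : ℕ} (S : Matrix (Fin m) (Fin m) ℤ) (τ : ℂ) : ℂ :=
  ∑' x : Fin m → ℤ, Complex.exp (π * I * τ * ((x ⬝ᵥ S.mulVec x : ℤ) : ℂ))

/-- Two integral matrices `S`, `S'` are equivalent if `S' = Uᵀ S U` for some
`U ∈ GL_m(ℤ)`. -/
def MatEquiv {m : ℕ} (S S' : Matrix (Fin m) (Fin m) ℤ) : Prop :=
  ∃ U : Matrix (Fin m) (Fin m) ℤ, IsUnit U.det ∧ S' = Uᵀ * S * U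

/-- `g_S`, the (finite) number of units `U ∈ GL_m(ℤ)` with `Uᵀ S U = S`, i.e. the order of
the automorphism group of `S`. -/
def autCard {m : ℕ} (S : Matrix (Fin m) (Fin m) ℤ) : ℕ :=
  Nat.card {U : Matrix (Fin m) (Fin m) ℤ // IsUnit U.det ∧ Uᵀ * S * U = S}

section GaussSums

variable {p : ℕ} [Fact p.Prime]

lemma addChar_sum {A R ι : Type*} [AddCommMonoid A] [CommMonoid R] (ψ : AddChar A R)
    (s : Finset ι) (f : ι → A) : ψ (∑ i ∈ s, f i) = ∏ i ∈ s, ψ (f i) := by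
  classical
  induction s using Finset.induction_on with
  | empty => simp
  | insert i s hi ih => rw [Finset.sum_insert hi, Finset.prod_insert hi, AddChar.map_add_eq_mul, ih]

/-- The quadratic character of `ℤ/pℤ` with complex values. -/
def quadraticCharComplex (p : ℕ) [Fact p.Prime] : MulChar (ZMod p) ℂ :=
  (quadraticChar (ZMod p)).ringHomComp (Int.castRingHom ℂ)

lemma quadraticCharComplex_ne_one (hp : p ≠ 2) : quadraticCharComplex p ≠ 1 :=
  (MulChar.ringHomComp_ne_one_iff (RingHom.injective_int _)).mpr <|
    quadraticChar_ne_one (by rwa [ZMod.ringChar_zmod_n])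

lemma quadraticCharComplex_isQuadratic (p : ℕ) [Fact p.Prime] :
    (quadraticCharComplex p).IsQuadratic :=
  (quadraticChar_isQuadratic _).comp _

lemma quadraticCharComplex_sq {a : ZMod p} (ha : a ≠ 0) : quadraticCharComplex p a ^ 2 = 1 := by
  have := quadraticChar_sq_one ha
  simp only [quadraticCharComplex, MulChar.ringHomComp_apply, eq_intCast]
  exact_mod_cast this

/-- A one-variable quadratic exponential sum is a twist of the quadratic Gauss sum. -/
lemma sum_stdAddChar_mul_sq (hp : p ≠ 2) {c : ZMod p} (hc : c ≠ 0) :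
    ∑ t : ZMod p, ZMod.stdAddChar (c * t ^ 2) =
      quadraticCharComplex p c * gaussSum (quadraticCharComplex p) ZMod.stdAddChar := by
  have hchar : ringChar (ZMod p) ≠ 2 := by rwa [ZMod.ringChar_zmod_n]
  have h1 : ∑ t : ZMod p, (ZMod.stdAddChar (c * t ^ 2) : ℂ) =
      ∑ s : ZMod p, (quadraticCharComplex p s + 1) * ZMod.stdAddChar (c * s) := by
    rw [← Finset.sum_fiberwise (s := Finset.univ) (g := fun t : ZMod p ↦ t ^ 2)]
    refine Finset.sum_congr rfl fun s _ ↦ ?_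
    have h2 : ((Finset.univ.filter fun t : ZMod p ↦ t ^ 2 = s).card : ℂ)
        = quadraticCharComplex p s + 1 := by
      have := quadraticChar_card_sqrts hchar s
      simp only [Set.toFinset_ofPred] at this
      simp only [quadraticCharComplex, MulChar.ringHomComp_apply, eq_intCast]
      exact_mod_cast this
    rw [Finset.sum_congr rfl (g := fun _ ↦ (ZMod.stdAddChar (c * s) : ℂ)), Finset.sum_const,
      nsmul_eq_mul, h2]
    intro t ht
    rw [(Finset.mem_filter.mp ht).2]
  have h3 : ∑ s : ZMod p, (ZMod.stdAddChar (c * s) : ℂ) = 0 := by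
    have := AddChar.sum_mulShift c (ZMod.isPrimitive_stdAddChar p)
    simp only [hc, if_false, Nat.cast_zero] at this
    simpa only [mul_comm] using this
  have h4 := gaussSum_mulShift (quadraticCharComplex p) (ZMod.stdAddChar (N := p)) (Units.mk0 c hc)
  have h5 := quadraticCharComplex_sq hc
  rw [h1]
  simp only [add_mul, one_mul, Finset.sum_add_distrib, h3, add_zero]
  rw [← h4, Units.val_mk0, ← mul_assoc, ← pow_two, h5, one_mul]
  rfl

/-- A symmetric matrix over `ℤ/pℤ`, `p` odd, is congruent to a diagonal matrix. -/
lemma exists_congr_diagonal (hp : p ≠ 2) {m : ℕ} {S : Matrix (Fin m) (Fin m) (ZMod p)}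
    (hS : S.IsSymm) : ∃ (P : Matrix (Fin m) (Fin m) (ZMod p)) (w : Fin m → ZMod p),
      IsUnit P.det ∧ Pᵀ * S * P = Matrix.diagonal w := by
  have h2 : (2 : ZMod p) ≠ 0 := Ring.two_ne_zero (by rwa [ZMod.ringChar_zmod_n])
  have : Invertible (2 : ZMod p) := invertibleOfNonzero h2
  obtain ⟨b, hb⟩ := LinearMap.BilinForm.exists_orthogonal_basis (K := ZMod p)
    (V := Fin m → ZMod p) (B := Matrix.toBilin' S) ⟨fun x y ↦
      (Matrix.isSymm_toBilin'_iff_isSymm.mpr hS).eq x y⟩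
  let b' := b.reindex (finCongr (Module.finrank_fin_fun (ZMod p)))
  refine ⟨(Pi.basisFun (ZMod p) (Fin m)).toMatrix b', fun i ↦ Matrix.toBilin' S (b' i) (b' i),
    ?_, ?_⟩
  · rw [← Matrix.isUnit_iff_isUnit_det]
    exact IsUnit.of_mul_eq_one _ (Module.Basis.toMatrix_mul_toMatrix_flip _ _)
  · ext i j
    have : ((((Pi.basisFun (ZMod p) (Fin m)).toMatrix b')ᵀ * S *
        ((Pi.basisFun (ZMod p) (Fin m)).toMatrix b')) i j) = Matrix.toBilin' S (b' i) (b' j) := by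
      rw [Matrix.toBilin'_apply', Matrix.mul_assoc]
      rfl
    rw [this, Matrix.diagonal_apply]
    split_ifs with h
    · rw [h]
    · have := hb (fun h' ↦ h ((finCongr (Module.finrank_fin_fun (ZMod p))).symm.injective h') :
        (finCongr (Module.finrank_fin_fun (ZMod p))).symm i ≠
          (finCongr (Module.finrank_fin_fun (ZMod p))).symm j)
      simpa [b', Function.onFun] using this

/-- The Gauss sum of a quadratic form of determinant one in `2 * k` variables, `k` even. -/
lemma sum_stdAddChar_quadForm (hp : p ≠ 2) {m k : ℕ} (hmk : m = 2 * k) (hk : Even k)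
    {S : Matrix (Fin m) (Fin m) (ZMod p)} (hS : S.IsSymm) (hdet : S.det = 1)
    {a : ZMod p} (ha : a ≠ 0) :
    ∑ x : Fin m → ZMod p, (ZMod.stdAddChar (a * (x ⬝ᵥ S *ᵥ x)) : ℂ) = (p : ℂ) ^ k := by
  obtain ⟨P, w, hP, hPS⟩ := exists_congr_diagonal hp hS
  have hw : ∏ i, w i = P.det ^ 2 := by
    have := congrArg Matrix.det hPS
    rw [Matrix.det_mul, Matrix.det_mul, Matrix.det_transpose, hdet, Matrix.det_diagonal] at this
    rw [← this]; ring
  have hw0 : ∀ i, w i ≠ 0 := by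
    intro i hi
    have h1 : ∏ i, w i = 0 := Finset.prod_eq_zero (Finset.mem_univ i) hi
    rw [h1] at hw
    exact hP.ne_zero (pow_eq_zero_iff two_ne_zero |>.mp hw.symm)
  have hPu : IsUnit P := (Matrix.isUnit_iff_isUnit_det _).mpr hP
  have hbij : Function.Bijective P.mulVec :=
    ⟨Matrix.mulVec_injective_of_isUnit hPu, Matrix.mulVec_surjective_iff_isUnit.mpr hPu⟩
  have hval : ∀ x, (P *ᵥ x) ⬝ᵥ S *ᵥ (P *ᵥ x) = ∑ i, w i * x i ^ 2 := by
    intro x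
    have : (P *ᵥ x) ⬝ᵥ S *ᵥ (P *ᵥ x) = x ⬝ᵥ (Pᵀ * S * P) *ᵥ x := by
      rw [← Matrix.mulVec_mulVec, ← Matrix.mulVec_mulVec, Matrix.dotProduct_mulVec x,
        ← Matrix.mulVec_transpose, Matrix.transpose_transpose]
    rw [this, hPS]
    simp only [dotProduct, Matrix.mulVec_diagonal]
    exact Finset.sum_congr rfl fun i _ ↦ by ring
  have hg : gaussSum (quadraticCharComplex p) ZMod.stdAddChar ^ 2 =
      quadraticCharComplex p (-1) * Fintype.card (ZMod p) :=
    gaussSum_sq (quadraticCharComplex_ne_one hp) (quadraticCharComplex_isQuadratic p)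
      (ZMod.isPrimitive_stdAddChar p)
  rw [← hbij.sum_comp]
  simp only [hval]
  have hprod : ∀ x : Fin m → ZMod p, (ZMod.stdAddChar (a * ∑ i, w i * x i ^ 2) : ℂ) =
      ∏ i, (ZMod.stdAddChar ((a * w i) * x i ^ 2) : ℂ) := by
    intro x
    simp only [Finset.mul_sum, addChar_sum, mul_assoc]
  simp only [hprod]
  rw [← Fintype.piFinset_univ, Finset.sum_prod_piFinset Finset.univ
    (fun i t ↦ (ZMod.stdAddChar ((a * w i) * t ^ 2) : ℂ))]
  rw [Finset.prod_congr rfl fun i _ ↦ sum_stdAddChar_mul_sq hp (mul_ne_zero ha (hw0 i))]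
  rw [Finset.prod_mul_distrib, ← map_prod, Finset.prod_mul_distrib, hw, map_mul, map_pow,
    quadraticCharComplex_sq hP.ne_zero, mul_one, Finset.prod_const, Finset.prod_const, map_pow,
    Finset.card_univ, Fintype.card_fin, hmk, pow_mul, pow_mul, quadraticCharComplex_sq ha, hg]
  obtain ⟨l, rfl⟩ := hk
  rw [mul_pow, ← two_mul, pow_mul (quadraticCharComplex p (-1)) 2 l,
    quadraticCharComplex_sq (by simp), ZMod.card]
  simp

lemma sum_stdAddChar_mul (t : ZMod p) :
    ∑ a : ZMod p, (ZMod.stdAddChar (a * t) : ℂ) = if t = 0 then (p : ℂ) else 0 := by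
  have := AddChar.sum_mulShift t (ZMod.isPrimitive_stdAddChar p)
  rw [this, ZMod.card]
  push_cast
  rfl

lemma sum_stdAddChar_dotProduct {m : ℕ} (z : Fin m → ZMod p) :
    ∑ x : Fin m → ZMod p, (ZMod.stdAddChar (x ⬝ᵥ z) : ℂ) = if z = 0 then (p : ℂ) ^ m else 0 := by
  simp only [dotProduct, addChar_sum]
  rw [← Fintype.piFinset_univ, Finset.sum_prod_piFinset Finset.univ
    (fun i t ↦ (ZMod.stdAddChar (t * z i) : ℂ))]
  simp only [sum_stdAddChar_mul]
  split_ifs with h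
  · simp [h]
  · obtain ⟨i, hi⟩ := Function.ne_iff.mp h
    exact Finset.prod_eq_zero (Finset.mem_univ i) (if_neg hi)

lemma quadForm_add_smul {R : Type*} [CommRing R] {m : ℕ} {S : Matrix (Fin m) (Fin m) R}
    (hS : S.IsSymm) (x y : Fin m → R) (c : R) :
    (x + c • y) ⬝ᵥ S *ᵥ (x + c • y) =
      x ⬝ᵥ S *ᵥ x + 2 * c * (x ⬝ᵥ S *ᵥ y) + c ^ 2 * (y ⬝ᵥ S *ᵥ y) := by
  have : y ⬝ᵥ S *ᵥ x = x ⬝ᵥ S *ᵥ y := by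
    rw [Matrix.dotProduct_mulVec, ← Matrix.mulVec_transpose, hS.eq, dotProduct_comm]
  simp only [Matrix.mulVec_add, Matrix.mulVec_smul, add_dotProduct, dotProduct_add,
    smul_dotProduct, dotProduct_smul, smul_eq_mul, this]
  ring

/-- The number of isotropic vectors orthogonal to a given vector. -/
lemma card_isotropic_orthogonal (hp : p ≠ 2) {m k : ℕ} (hmk : m = 2 * k) (hk : Even k)
    {S : Matrix (Fin m) (Fin m) (ZMod p)} (hS : S.IsSymm) (hdet : S.det = 1)
    (y : Fin m → ZMod p) :
    (p : ℂ) ^ 2 * (Finset.univ.filter fun x : Fin m → ZMod p ↦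
        x ⬝ᵥ S *ᵥ x = 0 ∧ x ⬝ᵥ S *ᵥ y = 0).card =
      (p : ℂ) ^ m * (if y = 0 then (p : ℂ) else 1) +
        (p : ℂ) ^ k * (if y ⬝ᵥ S *ᵥ y = 0 then (p : ℂ) * p - p else 0) := by
  have h2 : (2 : ZMod p) ≠ 0 := Ring.two_ne_zero (by rwa [ZMod.ringChar_zmod_n])
  have hcount : (p : ℂ) ^ 2 * (Finset.univ.filter fun x : Fin m → ZMod p ↦
      x ⬝ᵥ S *ᵥ x = 0 ∧ x ⬝ᵥ S *ᵥ y = 0).card =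
      ∑ a : ZMod p, ∑ b : ZMod p, ∑ x : Fin m → ZMod p,
        (ZMod.stdAddChar (a * (x ⬝ᵥ S *ᵥ x) + b * (x ⬝ᵥ S *ᵥ y)) : ℂ) := by
    have : ∀ a : ZMod p, ∑ b : ZMod p, ∑ x : Fin m → ZMod p,
        (ZMod.stdAddChar (a * (x ⬝ᵥ S *ᵥ x) + b * (x ⬝ᵥ S *ᵥ y)) : ℂ) =
        ∑ x : Fin m → ZMod p, ∑ b : ZMod p,
        (ZMod.stdAddChar (a * (x ⬝ᵥ S *ᵥ x) + b * (x ⬝ᵥ S *ᵥ y)) : ℂ) :=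
      fun a ↦ Finset.sum_comm
    simp only [this]
    rw [Finset.sum_comm]
    simp only [AddChar.map_add_eq_mul, ← Finset.mul_sum, ← Finset.sum_mul, sum_stdAddChar_mul]
    rw [Finset.card_filter]
    push_cast
    rw [Finset.mul_sum]
    refine Finset.sum_congr rfl fun x _ ↦ ?_
    split_ifs <;> simp_all [pow_two]
  have hzero : ∑ b : ZMod p, ∑ x : Fin m → ZMod p,
      (ZMod.stdAddChar (0 * (x ⬝ᵥ S *ᵥ x) + b * (x ⬝ᵥ S *ᵥ y)) : ℂ) =
      (p : ℂ) ^ m * (if y = 0 then (p : ℂ) else 1) := by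
    have h1 : ∀ (b : ZMod p) (x : Fin m → ZMod p),
        0 * (x ⬝ᵥ S *ᵥ x) + b * (x ⬝ᵥ S *ᵥ y) = x ⬝ᵥ (b • S *ᵥ y) := by
      intro b x
      rw [dotProduct_smul, smul_eq_mul, zero_mul, zero_add]
    simp only [h1, sum_stdAddChar_dotProduct]
    have h3 : S *ᵥ y = 0 ↔ y = 0 := by
      constructor
      · intro h
        exact Matrix.eq_zero_of_mulVec_eq_zero (by rw [hdet]; exact one_ne_zero) h
      · rintro rfl
        exact Matrix.mulVec_zero _
    simp only [smul_eq_zero, h3]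
    split_ifs with h
    · simp [h, mul_comm]
    · simp [h]
  have hne : ∀ a : ZMod p, a ≠ 0 → ∑ b : ZMod p, ∑ x : Fin m → ZMod p,
      (ZMod.stdAddChar (a * (x ⬝ᵥ S *ᵥ x) + b * (x ⬝ᵥ S *ᵥ y)) : ℂ) =
      (p : ℂ) ^ k * ∑ c : ZMod p, (ZMod.stdAddChar (a * (-(c ^ 2 * (y ⬝ᵥ S *ᵥ y)))) : ℂ) := by
    intro a ha
    rw [← (mulLeft_bijective₀ (2 * a) (mul_ne_zero h2 ha)).sum_comp, Finset.mul_sum]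
    refine Finset.sum_congr rfl fun c _ ↦ ?_
    rw [← sum_stdAddChar_quadForm hp hmk hk hS hdet ha, Finset.sum_mul]
    refine Eq.trans (Finset.sum_congr rfl fun x _ ↦ ?_)
      ((Equiv.addRight (c • y)).bijective.sum_comp _)
    rw [← AddChar.map_add_eq_mul, Equiv.coe_addRight, quadForm_add_smul hS]
    congr 1
    ring
  have hsum : ∑ a ∈ ({0} : Finset (ZMod p))ᶜ, ∑ c : ZMod p,
      (ZMod.stdAddChar (a * (-(c ^ 2 * (y ⬝ᵥ S *ᵥ y)))) : ℂ) =
      if y ⬝ᵥ S *ᵥ y = 0 then (p : ℂ) * p - p else 0 := by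
    rw [Finset.sum_comm]
    have h1 : ∀ c : ZMod p, ∑ a ∈ ({0} : Finset (ZMod p))ᶜ,
        (ZMod.stdAddChar (a * (-(c ^ 2 * (y ⬝ᵥ S *ᵥ y)))) : ℂ) =
        (if c ^ 2 * (y ⬝ᵥ S *ᵥ y) = 0 then (p : ℂ) else 0) - 1 := by
      intro c
      have := sum_stdAddChar_mul (-(c ^ 2 * (y ⬝ᵥ S *ᵥ y)))
      rw [← Finset.sum_add_sum_compl {0}] at this
      simp only [Finset.sum_singleton, zero_mul, AddChar.map_zero_eq_one, neg_eq_zero] at this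
      rw [← this]
      ring
    simp only [h1, Finset.sum_sub_distrib]
    split_ifs with h <;> simp [h]
  rw [hcount, ← Finset.sum_add_sum_compl {0}, Finset.sum_singleton, hzero,
    Finset.sum_congr rfl fun a ha ↦ hne a (by simpa using ha), ← Finset.mul_sum, hsum]

end GaussSums

section Reduction

/-- Reduction of an integral vector modulo `p`. -/
def redVec (p : ℕ) {m : ℕ} (x : Fin m → ℤ) : Fin m → ZMod p := fun i ↦ (x i : ZMod p)

/-- Reduction of an integral matrix modulo `p`. -/
def redMat (p : ℕ) {m : ℕ} (S : Matrix (Fin m) (Fin m) ℤ) : Matrix (Fin m) (Fin m) (ZMod p) :=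
  S.map (Int.castRingHom (ZMod p))

variable {p m : ℕ} {S S' : Matrix (Fin m) (Fin m) ℤ}

lemma redVec_add (x y : Fin m → ℤ) : redVec p (x + y) = redVec p x + redVec p y := by
  ext i; simp [redVec]

lemma redVec_smul (a : ℤ) (x : Fin m → ℤ) : redVec p (a • x) = (a : ZMod p) • redVec p x := by
  ext i; simp [redVec]

lemma redVec_eq_zero_iff {x : Fin m → ℤ} :
    redVec p x = 0 ↔ ∃ u : Fin m → ℤ, x = (p : ℤ) • u := by
  constructor
  · intro h
    have : ∀ i, (p : ℤ) ∣ x i := fun i ↦ (ZMod.intCast_zmod_eq_zero_iff_dvd _ _).mp (congrFun h i)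
    choose u hu using this
    exact ⟨u, funext fun i ↦ by simp [hu i]⟩
  · rintro ⟨u, rfl⟩
    ext i
    simp [redVec]

lemma redVec_surjective (p : ℕ) {m : ℕ} (v : Fin m → ZMod p) :
    ∃ x : Fin m → ℤ, redVec p x = v := by
  choose f hf using fun i ↦ ZMod.intCast_surjective (v i)
  exact ⟨f, funext hf⟩

lemma redVec_eq_iff {x y : Fin m → ℤ} :
    redVec p x = redVec p y ↔ ∃ u : Fin m → ℤ, x = y + (p : ℤ) • u := by
  have h : redVec p (x - y) = redVec p x - redVec p y := by ext i; simp [redVec]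
  rw [← sub_eq_zero, ← h, redVec_eq_zero_iff]
  simp only [sub_eq_iff_eq_add']

lemma redVec_mulVec (S : Matrix (Fin m) (Fin m) ℤ) (x : Fin m → ℤ) :
    redVec p (S *ᵥ x) = redMat p S *ᵥ redVec p x := by
  ext i
  exact RingHom.map_mulVec (Int.castRingHom (ZMod p)) S x i

lemma cast_dotProduct (x y : Fin m → ℤ) :
    ((x ⬝ᵥ y : ℤ) : ZMod p) = redVec p x ⬝ᵥ redVec p y :=
  RingHom.map_dotProduct (Int.castRingHom (ZMod p)) x y

lemma cast_bilin (S : Matrix (Fin m) (Fin m) ℤ) (x y : Fin m → ℤ) :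
    ((x ⬝ᵥ S *ᵥ y : ℤ) : ZMod p) = redVec p x ⬝ᵥ redMat p S *ᵥ redVec p y := by
  rw [cast_dotProduct, redVec_mulVec]

lemma dvd_bilin_iff {S : Matrix (Fin m) (Fin m) ℤ} {x y : Fin m → ℤ} :
    (p : ℤ) ∣ x ⬝ᵥ S *ᵥ y ↔ redVec p x ⬝ᵥ redMat p S *ᵥ redVec p y = 0 := by
  rw [← cast_bilin, ZMod.intCast_zmod_eq_zero_iff_dvd]

lemma redMat_mul (A B : Matrix (Fin m) (Fin m) ℤ) :
    redMat p (A * B) = redMat p A * redMat p B := Matrix.map_mul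

lemma redMat_transpose (A : Matrix (Fin m) (Fin m) ℤ) : redMat p Aᵀ = (redMat p A)ᵀ := rfl

lemma redMat_det (A : Matrix (Fin m) (Fin m) ℤ) : (redMat p A).det = (A.det : ZMod p) :=
  (RingHom.map_det (Int.castRingHom (ZMod p)) A).symm

lemma redMat_isSymm (hS : S.IsSymm) : (redMat p S).IsSymm := by
  rw [Matrix.IsSymm, ← redMat_transpose, hS.eq]

lemma redMat_det_one (hS : S.det = 1) : (redMat p S).det = 1 := by
  rw [redMat_det, hS, Int.cast_one]

lemma bilin_comm {R : Type*} [CommRing R] {S : Matrix (Fin m) (Fin m) R} (hS : S.IsSymm)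
    (x y : Fin m → R) : x ⬝ᵥ S *ᵥ y = y ⬝ᵥ S *ᵥ x := by
  rw [Matrix.dotProduct_mulVec, ← Matrix.mulVec_transpose, hS.eq, dotProduct_comm]

lemma bilin_mulVec {R : Type*} [CommRing R] (S B : Matrix (Fin m) (Fin m) R)
    (x y : Fin m → R) : (B *ᵥ x) ⬝ᵥ S *ᵥ (B *ᵥ y) = x ⬝ᵥ (Bᵀ * S * B) *ᵥ y := by
  rw [← Matrix.mulVec_mulVec, ← Matrix.mulVec_mulVec, Matrix.dotProduct_mulVec x,
    ← Matrix.mulVec_transpose, Matrix.transpose_transpose]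

lemma bilin_mulVec_left {R : Type*} [CommRing R] (S B : Matrix (Fin m) (Fin m) R)
    (x y : Fin m → R) : (B *ᵥ x) ⬝ᵥ S *ᵥ y = x ⬝ᵥ (Bᵀ * S) *ᵥ y := by
  rw [← Matrix.mulVec_mulVec, Matrix.dotProduct_mulVec x,
    ← Matrix.mulVec_transpose, Matrix.transpose_transpose]

/-- If `X B = c` with `c ≠ 0` a scalar, then also `B X = c`. -/
lemma mul_eq_smul_one_comm {X B : Matrix (Fin m) (Fin m) ℤ} {c : ℤ} (hc : c ≠ 0)
    (h : X * B = c • (1 : Matrix (Fin m) (Fin m) ℤ)) :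
    B * X = c • (1 : Matrix (Fin m) (Fin m) ℤ) := by
  have hdet : B.det ≠ 0 := by
    intro h0
    have := congrArg Matrix.det h
    rw [Matrix.det_mul, h0, mul_zero, Matrix.det_smul, Matrix.det_one, mul_one] at this
    exact pow_ne_zero _ hc this.symm
  have h1 : (B * X - c • (1 : Matrix (Fin m) (Fin m) ℤ)) * B = 0 := by
    rw [sub_mul, Matrix.mul_assoc, h, Matrix.mul_smul, Matrix.smul_mul, mul_one, one_mul, sub_self]
  have h2 := congrArg (· * B.adjugate) h1
  simp only [Matrix.mul_assoc, Matrix.mul_adjugate, zero_mul, Matrix.mul_smul, mul_one] at h2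
  exact sub_eq_zero.mp ((smul_eq_zero.mp h2).resolve_left hdet)

lemma mul_left_cancel_of_mul_eq_smul_one {X B C D : Matrix (Fin m) (Fin m) ℤ} {c : ℤ} (hc : c ≠ 0)
    (h : X * B = c • (1 : Matrix (Fin m) (Fin m) ℤ)) (hCD : B * C = B * D) : C = D := by
  have := congrArg (X * ·) hCD
  simp only [← Matrix.mul_assoc, h, smul_mul_assoc, one_mul] at this
  exact smul_right_injective _ hc this

/-- A similitude `B` between unimodular forms has `S'⁻¹ Bᵀ S` as an inverse up to a scalar. -/
lemma similitude_inv_mul {B : Matrix (Fin m) (Fin m) ℤ} {c : ℤ} (hS' : S'.det = 1)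
    (hB : Bᵀ * S * B = c • S') :
    (S'⁻¹ * Bᵀ * S) * B = c • (1 : Matrix (Fin m) (Fin m) ℤ) := by
  rw [Matrix.mul_assoc, Matrix.mul_assoc, ← Matrix.mul_assoc Bᵀ, hB, Matrix.mul_smul,
    Matrix.nonsing_inv_mul _ (by rw [hS']; exact isUnit_one)]

end Reduction

section IsotropicVectors

variable {p m : ℕ} [Fact p.Prime] {S : Matrix (Fin m) (Fin m) (ZMod p)}

lemma exists_bilin_eq (hS : S.det = 1) {v : Fin m → ZMod p} (hv : v ≠ 0) (c : ZMod p) :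
    ∃ z, v ⬝ᵥ S *ᵥ z = c := by
  obtain ⟨i, hi⟩ := Function.ne_iff.mp hv
  refine ⟨S⁻¹ *ᵥ Pi.single i (c / v i), ?_⟩
  rw [Matrix.mulVec_mulVec, Matrix.mul_nonsing_inv _ (by rw [hS]; exact isUnit_one),
    Matrix.one_mulVec, dotProduct_single, mul_div_cancel₀ _ hi]

lemma exists_smul_of_orthogonal (hS : S.det = 1) {v z : Fin m → ZMod p} (hv : v ≠ 0)
    (h : ∀ u, v ⬝ᵥ S *ᵥ u = 0 → z ⬝ᵥ S *ᵥ u = 0) : ∃ a : ZMod p, z = a • v := by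
  have h' : ∀ u, v ⬝ᵥ u = 0 → z ⬝ᵥ u = 0 := by
    intro u hu
    have := h (S⁻¹ *ᵥ u)
    rw [Matrix.mulVec_mulVec, Matrix.mul_nonsing_inv _ (by rw [hS]; exact isUnit_one),
      Matrix.one_mulVec] at this
    exact this hu
  obtain ⟨i, hi⟩ := Function.ne_iff.mp hv
  refine ⟨z i / v i, funext fun j ↦ ?_⟩
  have := h' (Pi.single j 1 - Pi.single i (v j / v i)) (by
    rw [dotProduct_sub, dotProduct_single, dotProduct_single, mul_one, mul_div_cancel₀ _ hi,
      sub_self])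
  rw [dotProduct_sub, dotProduct_single, dotProduct_single, mul_one, sub_eq_zero] at this
  rw [this, Pi.smul_apply, smul_eq_mul]
  ring

end IsotropicVectors

section NeighborLattice

variable {p m : ℕ} {S S' : Matrix (Fin m) (Fin m) ℤ}

lemma bilin_add_smul_left (S : Matrix (Fin m) (Fin m) ℤ) (a b : ℤ) (x y z : Fin m → ℤ) :
    (a • x + b • y) ⬝ᵥ S *ᵥ z = a * (x ⬝ᵥ S *ᵥ z) + b * (y ⬝ᵥ S *ᵥ z) := by
  rw [add_dotProduct, smul_dotProduct, smul_dotProduct, smul_eq_mul, smul_eq_mul]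

lemma bilin_add_smul_right (S : Matrix (Fin m) (Fin m) ℤ) (a b : ℤ) (x y z : Fin m → ℤ) :
    z ⬝ᵥ S *ᵥ (a • x + b • y) = a * (z ⬝ᵥ S *ᵥ x) + b * (z ⬝ᵥ S *ᵥ y) := by
  rw [Matrix.mulVec_add, dotProduct_add, Matrix.mulVec_smul, Matrix.mulVec_smul, dotProduct_smul,
    dotProduct_smul, smul_eq_mul, smul_eq_mul]

/-- For `w` primitive at `p` with `p² ∣ wᵀSw`, this is `p` times the Kneser `p`-neighbor of `ℤ^m`
at `w`. -/
def neighborLattice (p : ℕ) {m : ℕ} (S : Matrix (Fin m) (Fin m) ℤ) (w : Fin m → ℤ) :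
    Submodule ℤ (Fin m → ℤ) where
  carrier := {x | ∃ a : ℤ, ∃ u : Fin m → ℤ, x = a • w + (p : ℤ) • u ∧ (p : ℤ) ∣ w ⬝ᵥ S *ᵥ u}
  zero_mem' := ⟨0, 0, by simp, by simp⟩
  add_mem' := by
    rintro _ _ ⟨a, u, rfl, hu⟩ ⟨b, v, rfl, hv⟩
    refine ⟨a + b, u + v, by module, ?_⟩
    rw [Matrix.mulVec_add, dotProduct_add]
    exact dvd_add hu hv
  smul_mem' := by
    rintro c _ ⟨a, u, rfl, hu⟩
    refine ⟨c * a, c • u, by module, ?_⟩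
    rw [Matrix.mulVec_smul, dotProduct_smul]
    exact hu.mul_left c

lemma sq_smul_mem_neighborLattice (w u : Fin m → ℤ) :
    (p : ℤ) ^ 2 • u ∈ neighborLattice p S w :=
  ⟨0, (p : ℤ) • u, by rw [smul_smul]; module, by
    rw [Matrix.mulVec_smul, dotProduct_smul]; exact Dvd.intro _ rfl⟩

lemma dvd_bilin_of_mem_neighborLattice (hS : S.IsSymm) {w x y : Fin m → ℤ}
    (hw : (p : ℤ) ^ 2 ∣ w ⬝ᵥ S *ᵥ w)
    (hx : x ∈ neighborLattice p S w) (hy : y ∈ neighborLattice p S w) :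
    (p : ℤ) ^ 2 ∣ x ⬝ᵥ S *ᵥ y := by
  obtain ⟨a, u, rfl, hu⟩ := hx
  obtain ⟨b, v, rfl, hv⟩ := hy
  rw [bilin_add_smul_left, bilin_add_smul_right, bilin_add_smul_right, bilin_comm hS u w]
  obtain ⟨c, hc⟩ := hw
  obtain ⟨d, hd⟩ := hu
  obtain ⟨e, he⟩ := hv
  rw [hc, hd, he]
  exact ⟨a * b * c + a * e + b * d + u ⬝ᵥ S *ᵥ v, by ring⟩

variable [Fact p.Prime]

lemma mem_neighborLattice_of_dvd_bilin (hS : S.IsSymm) (hdet : S.det = 1) {w z : Fin m → ℤ}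
    (hw : (p : ℤ) ^ 2 ∣ w ⬝ᵥ S *ᵥ w) (hw0 : redVec p w ≠ 0)
    (h : ∀ x ∈ neighborLattice p S w, (p : ℤ) ^ 2 ∣ z ⬝ᵥ S *ᵥ x) :
    z ∈ neighborLattice p S w := by
  have hp0 : (p : ℤ) ≠ 0 := by exact_mod_cast (Fact.out : p.Prime).ne_zero
  obtain ⟨a, ha⟩ := exists_smul_of_orthogonal (redMat_det_one (p := p) hdet) hw0
    (z := redVec p z) (by
      intro u hu
      obtain ⟨u, rfl⟩ := redVec_surjective p u
      rw [← dvd_bilin_iff] at hu ⊢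
      have := h ((p : ℤ) • u) ⟨0, u, by simp, hu⟩
      rw [Matrix.mulVec_smul, dotProduct_smul, smul_eq_mul, pow_two] at this
      exact (mul_dvd_mul_iff_left hp0).mp this)
  obtain ⟨a, rfl⟩ := ZMod.intCast_surjective a
  rw [← redVec_smul, redVec_eq_iff] at ha
  obtain ⟨u, rfl⟩ := ha
  refine ⟨a, u, rfl, ?_⟩
  have := h w ⟨1, 0, by simp, by simp⟩
  rw [bilin_add_smul_left, dvd_add_right (hw.mul_left a), pow_two,
    mul_dvd_mul_iff_left hp0] at this
  rwa [bilin_comm hS]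

lemma exists_lift_isotropic (hp : p ≠ 2) (hS : S.IsSymm) (hdet : S.det = 1)
    {v : Fin m → ZMod p} (hv : v ≠ 0) (hiso : v ⬝ᵥ redMat p S *ᵥ v = 0) :
    ∃ w : Fin m → ℤ, redVec p w = v ∧ (p : ℤ) ^ 2 ∣ w ⬝ᵥ S *ᵥ w := by
  obtain ⟨w, rfl⟩ := redVec_surjective p v
  obtain ⟨q, hq⟩ := dvd_bilin_iff.mpr hiso
  have h2 : (2 : ZMod p) ≠ 0 := by
    have := ZMod.ringChar_zmod_n p
    exact Ring.two_ne_zero (by rwa [this])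
  obtain ⟨z, hz⟩ := exists_bilin_eq (redMat_det_one (p := p) hdet) hv (-(q : ZMod p) / 2)
  obtain ⟨z, rfl⟩ := redVec_surjective p z
  refine ⟨w + (p : ℤ) • z, redVec_eq_iff.mpr ⟨z, rfl⟩, ?_⟩
  have : (p : ℤ) ∣ q + 2 * (w ⬝ᵥ S *ᵥ z) := by
    rw [← ZMod.intCast_zmod_eq_zero_iff_dvd]
    push_cast
    rw [cast_bilin, hz]
    field_simp
    ring
  obtain ⟨c, hc⟩ := this
  rw [quadForm_add_smul hS, hq]
  exact ⟨c + z ⬝ᵥ S *ᵥ z, by linear_combination (p : ℤ) * hc⟩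

lemma mem_neighborLattice_iff (hp : p ≠ 2) (hS : S.IsSymm) {w : Fin m → ℤ}
    (hw : (p : ℤ) ^ 2 ∣ w ⬝ᵥ S *ᵥ w) (hw0 : redVec p w ≠ 0) {x : Fin m → ℤ} :
    x ∈ neighborLattice p S w ↔
      (redVec p x ≠ 0 ∧ (∃ c : ZMod p, redVec p x = c • redVec p w) ∧
        (p : ℤ) ^ 2 ∣ x ⬝ᵥ S *ᵥ x) ∨
      ∃ u : Fin m → ℤ, x = (p : ℤ) • u ∧ redVec p w ⬝ᵥ redMat p S *ᵥ redVec p u = 0 := by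
  have hp0 : (p : ℤ) ≠ 0 := by exact_mod_cast (Fact.out : p.Prime).ne_zero
  have hpr : Prime (p : ℤ) := Nat.prime_iff_prime_int.mp Fact.out
  constructor
  · intro hx
    have hQ := dvd_bilin_of_mem_neighborLattice hS hw hx hx
    obtain ⟨a, u, rfl, hu⟩ := hx
    by_cases h0 : redVec p (a • w + (p : ℤ) • u) = 0
    · right
      have ha : (p : ℤ) ∣ a := by
        rw [redVec_eq_iff.mpr ⟨u, rfl⟩, redVec_smul, smul_eq_zero, or_iff_left hw0] at h0
        exact (ZMod.intCast_zmod_eq_zero_iff_dvd _ _).mp h0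
      obtain ⟨b, rfl⟩ := ha
      refine ⟨b • w + u, by rw [smul_add, smul_smul], ?_⟩
      rw [← dvd_bilin_iff, Matrix.mulVec_add, dotProduct_add, Matrix.mulVec_smul, dotProduct_smul]
      exact dvd_add (((Dvd.intro_left _ (pow_two (p : ℤ)).symm).trans hw).mul_left b) hu
    · exact Or.inl ⟨h0, ⟨a, by rw [redVec_eq_iff.mpr ⟨u, rfl⟩, redVec_smul]⟩, hQ⟩
  · rintro (⟨h0, ⟨c, hc⟩, hQ⟩ | ⟨u, rfl, hu⟩)
    · obtain ⟨a, rfl⟩ := ZMod.intCast_surjective c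
      have ha : ¬ (p : ℤ) ∣ a := by
        rw [← ZMod.intCast_zmod_eq_zero_iff_dvd]
        intro h
        rw [h, zero_smul] at hc
        exact h0 hc
      rw [← redVec_smul, redVec_eq_iff] at hc
      obtain ⟨u, rfl⟩ := hc
      refine ⟨a, u, rfl, ?_⟩
      rw [bilin_add_smul_left, bilin_add_smul_right, bilin_add_smul_right, bilin_comm hS u w] at hQ
      obtain ⟨c, hc⟩ := hw
      obtain ⟨d, hd⟩ := hQ
      have h3 : (p : ℤ) ∣ 2 * (a * (w ⬝ᵥ S *ᵥ u)) := by
        refine ⟨d - a ^ 2 * c - u ⬝ᵥ S *ᵥ u, mul_left_cancel₀ hp0 ?_⟩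
        rw [hc] at hd
        linear_combination hd
      have h2 : ¬ (p : ℤ) ∣ 2 := by
        intro h
        have : p ∣ 2 := by exact_mod_cast h
        exact hp ((Nat.prime_dvd_prime_iff_eq Fact.out Nat.prime_two).mp this)
      exact (hpr.dvd_or_dvd ((hpr.dvd_or_dvd h3).resolve_left h2)).resolve_left ha
    · exact ⟨0, u, by simp, dvd_bilin_iff.mpr hu⟩

end NeighborLattice

section NeighborBasis

variable {p m : ℕ} [Fact p.Prime] {S S' : Matrix (Fin m) (Fin m) ℤ}

lemma range_of_redMat_eq_vecMulVec (hp : p ≠ 2) (hS : S.IsSymm) (hdet' : S'.det = 1)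
    {w : Fin m → ℤ} (hw : (p : ℤ) ^ 2 ∣ w ⬝ᵥ S *ᵥ w) (hw0 : redVec p w ≠ 0)
    {B : Matrix (Fin m) (Fin m) ℤ} (hB : Bᵀ * S * B = (p : ℤ) ^ 2 • S')
    {t : Fin m → ZMod p} (ht : t ≠ 0) (hBt : redMat p B = Matrix.vecMulVec (redVec p w) t)
    (x : Fin m → ℤ) : x ∈ neighborLattice p S w ↔ ∃ y, B *ᵥ y = x := by
  have hp0 : (p : ℤ) ^ 2 ≠ 0 := pow_ne_zero _ (by exact_mod_cast (Fact.out : p.Prime).ne_zero)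
  have key : ∀ y : Fin m → ℤ, redVec p (B *ᵥ y) = (t ⬝ᵥ redVec p y) • redVec p w := by
    intro y
    rw [redVec_mulVec, hBt, Matrix.vecMulVec_mulVec]
    ext i; simp [mul_comm]
  have hmem1 : ∀ y : Fin m → ℤ, t ⬝ᵥ redVec p y ≠ 0 → B *ᵥ y ∈ neighborLattice p S w := by
    intro y hy
    refine (mem_neighborLattice_iff hp hS hw hw0).mpr (Or.inl ⟨?_, ⟨_, key y⟩, ?_⟩)
    · rw [key]; exact smul_ne_zero hy hw0
    · rw [bilin_mulVec, hB, Matrix.smul_mulVec, dotProduct_smul]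
      exact Dvd.intro _ rfl
  have hmem : ∀ y, B *ᵥ y ∈ neighborLattice p S w := by
    intro y
    by_cases hy : t ⬝ᵥ redVec p y = 0
    · obtain ⟨z, hz⟩ := exists_bilin_eq (S := 1) Matrix.det_one ht 1
      obtain ⟨z, rfl⟩ := redVec_surjective p z
      rw [Matrix.one_mulVec] at hz
      have h1 := hmem1 z (by rw [hz]; exact one_ne_zero)
      have h2 := hmem1 (y + z) (by rw [redVec_add, dotProduct_add, hy, hz, zero_add]
                                   exact one_ne_zero)
      simpa [Matrix.mulVec_add] using sub_mem h2 h1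
    · exact hmem1 y hy
  constructor
  · intro hx
    have : ∀ i, (p : ℤ) ^ 2 ∣ (Bᵀ *ᵥ (S *ᵥ x)) i := by
      intro i
      have := dvd_bilin_of_mem_neighborLattice hS hw (hmem (Pi.single i 1)) hx
      rw [bilin_mulVec_left, single_dotProduct, one_mul, ← Matrix.mulVec_mulVec] at this
      exact this
    choose z hz using this
    have hz' : (Bᵀ * S) *ᵥ x = (p : ℤ) ^ 2 • z := by
      rw [← Matrix.mulVec_mulVec]; ext i; simp [hz i]
    have h1 := mul_eq_smul_one_comm hp0 (similitude_inv_mul hdet' hB)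
    refine ⟨S'⁻¹ *ᵥ z, smul_right_injective _ hp0 ?_⟩
    have h2 := congrArg (· *ᵥ x) h1
    simp only [Matrix.mul_assoc, ← Matrix.mulVec_mulVec x] at h2
    simp only [← Matrix.mulVec_mulVec, Matrix.smul_mulVec, Matrix.one_mulVec] at h2 hz'
    rw [hz'] at h2
    simp only [Matrix.mulVec_smul] at h2
    exact h2
  · rintro ⟨y, rfl⟩
    exact hmem y

lemma redMat_eq_vecMulVec_of_range {w : Fin m → ℤ} (hw0 : redVec p w ≠ 0)
    {B : Matrix (Fin m) (Fin m) ℤ}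
    (hB : ∀ x, x ∈ neighborLattice p S w ↔ ∃ y, B *ᵥ y = x) :
    ∃ t : Fin m → ZMod p, t ≠ 0 ∧ redMat p B = Matrix.vecMulVec (redVec p w) t := by
  have h1 : ∀ j, ∃ c : ZMod p, redVec p (B *ᵥ Pi.single j 1) = c • redVec p w := by
    intro j
    obtain ⟨a, u, hu, -⟩ := (hB _).mpr ⟨Pi.single j 1, rfl⟩
    exact ⟨a, by rw [redVec_eq_iff.mpr ⟨u, hu⟩, redVec_smul]⟩
  choose t ht using h1
  have hBt : redMat p B = Matrix.vecMulVec (redVec p w) t := by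
    ext i j
    have := congrFun (ht j) i
    simp only [redVec, Matrix.mulVec_single_one, Matrix.col_apply, Pi.smul_apply,
      smul_eq_mul] at this
    rw [Matrix.vecMulVec_apply, mul_comm]
    exact this
  refine ⟨t, ?_, hBt⟩
  rintro rfl
  obtain ⟨y, hy⟩ := (hB w).mp ⟨1, 0, by simp, by simp⟩
  apply hw0
  rw [← hy, redVec_mulVec, hBt]
  ext i; simp

lemma exists_matrix_range_eq (p : ℕ) [Fact p.Prime] (S : Matrix (Fin m) (Fin m) ℤ)
    (w : Fin m → ℤ) :
    ∃ B : Matrix (Fin m) (Fin m) ℤ, ∀ x, x ∈ neighborLattice p S w ↔ ∃ y, B *ᵥ y = x := by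
  have hp0 : (p : ℤ) ^ 2 ≠ 0 := pow_ne_zero _ (by exact_mod_cast (Fact.out : p.Prime).ne_zero)
  have hle : Module.finrank ℤ (neighborLattice p S w) ≤ m := by
    simpa using Submodule.finrank_le (neighborLattice p S w)
  let f : (Fin m → ℤ) →ₗ[ℤ] neighborLattice p S w :=
    LinearMap.codRestrict _ ((p : ℤ) ^ 2 • LinearMap.id) fun u ↦ sq_smul_mem_neighborLattice w u
  have hf : Function.Injective f := by
    intro x y hxy
    exact smul_right_injective _ hp0 (congrArg Subtype.val hxy)
  have hge : m ≤ Module.finrank ℤ (neighborLattice p S w) := by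
    simpa using LinearMap.finrank_le_finrank_of_injective hf
  let b := Module.finBasisOfFinrankEq ℤ (neighborLattice p S w) (le_antisymm hle hge)
  refine ⟨Matrix.of fun i j ↦ (b j : Fin m → ℤ) i, fun x ↦ ?_⟩
  have h : ∀ y : Fin m → ℤ, (Matrix.of fun i j ↦ (b j : Fin m → ℤ) i) *ᵥ y
      = ((∑ j, y j • b j : neighborLattice p S w) : Fin m → ℤ) := by
    intro y
    ext i
    simp [Matrix.mulVec, dotProduct, mul_comm]
  constructor
  · intro hx
    refine ⟨fun j ↦ b.repr ⟨x, hx⟩ j, ?_⟩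
    rw [h, b.sum_repr]
  · rintro ⟨y, rfl⟩
    rw [h]
    exact Subtype.prop _

end NeighborBasis

section NeighborClass

variable {p m : ℕ} {S S' : Matrix (Fin m) (Fin m) ℤ}

lemma even_quadForm (hS : S.IsSymm) (hev : ∀ i, Even (S i i)) (x : Fin m → ℤ) :
    Even (x ⬝ᵥ S *ᵥ x) := by
  have h1 : x ⬝ᵥ S *ᵥ x = ∑ ij : Fin m × Fin m, x ij.1 * S ij.1 ij.2 * x ij.2 := by
    simp only [dotProduct, Matrix.mulVec, Finset.mul_sum, Fintype.sum_prod_type, mul_assoc]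
  rw [h1, ← (ZMod.intCast_eq_zero_iff_even), Int.cast_sum]
  refine Finset.sum_involution (fun ij _ ↦ (ij.2, ij.1)) ?_ ?_ ?_ ?_
  · rintro ⟨i, j⟩ -
    dsimp only
    rw [hS.apply i j, ← Int.cast_add, ZMod.intCast_eq_zero_iff_even]
    exact ⟨x i * S i j * x j, by rw [← hS.apply i j]; ring⟩
  · rintro ⟨i, j⟩ - h h'
    obtain rfl : j = i := (Prod.ext_iff.mp h').1
    refine h ?_
    rw [ZMod.intCast_eq_zero_iff_even]
    exact ((hev j).mul_left _).mul_right _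
  · intro _ _; exact Finset.mem_univ _
  · rintro ⟨i, j⟩ -; rfl

lemma dotProduct_map_cast (S : Matrix (Fin m) (Fin m) ℤ) (x : Fin m → ℤ) :
    (fun i ↦ (x i : ℝ)) ⬝ᵥ S.map ((↑) : ℤ → ℝ) *ᵥ (fun i ↦ (x i : ℝ))
      = ((x ⬝ᵥ S *ᵥ x : ℤ) : ℝ) := by
  simp [dotProduct, Matrix.mulVec]

/-- A change of basis of index coprime to the similitude factor preserves the genus conditions. -/
lemma isPosDefEvenUnimodular_of_similitude {c : ℤ} (hc : 0 < c) (hodd : Odd c)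
    (hS : IsPosDefEvenUnimodular S) {B W : Matrix (Fin m) (Fin m) ℤ}
    (hB : Bᵀ * S * B = c • S') (hdetB : B.det ≠ 0) (hW : S' * W = 1) :
    IsPosDefEvenUnimodular S' := by
  obtain ⟨hsymm, hpos, hdet, hev⟩ := hS
  have hsymm' : S'.IsSymm := by
    have : c • S'ᵀ = c • S' := by
      rw [← Matrix.transpose_smul, ← hB, Matrix.transpose_mul, Matrix.transpose_mul, hsymm.eq,
        Matrix.transpose_transpose, Matrix.mul_assoc]
    exact smul_right_injective _ hc.ne' this
  have hBr : (B.map ((↑) : ℤ → ℝ))ᵀ * S.map ((↑) : ℤ → ℝ) * B.map ((↑) : ℤ → ℝ)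
      = (c : ℝ) • S'.map ((↑) : ℤ → ℝ) := by
    have h1 := congrArg (fun M : Matrix (Fin m) (Fin m) ℤ ↦ M.map (Int.castRingHom ℝ)) hB
    simp only [Matrix.map_mul] at h1
    have h2 : (c • S').map (Int.castRingHom ℝ) = (c : ℝ) • S'.map ((↑) : ℤ → ℝ) := by
      ext i j
      rw [Matrix.map_apply, Matrix.smul_apply, Matrix.smul_apply, smul_eq_mul, smul_eq_mul, map_mul]
      rfl
    exact h1.trans h2
  have hdetBr : (B.map ((↑) : ℤ → ℝ)).det ≠ 0 := by
    have := RingHom.map_det (Int.castRingHom ℝ) B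
    intro h
    rw [show (Int.castRingHom ℝ).mapMatrix B = B.map ((↑) : ℤ → ℝ) from rfl, h] at this
    exact hdetB (by simpa using this)
  have hpos' : (S'.map ((↑) : ℤ → ℝ)).PosDef := by
    have h1 : ((c : ℝ) • S'.map ((↑) : ℤ → ℝ)).PosDef := by
      rw [← hBr]
      have := hpos.conjTranspose_mul_mul_same (B := B.map ((↑) : ℤ → ℝ))
        (Matrix.mulVec_injective_iff_isUnit.mpr
          ((Matrix.isUnit_iff_isUnit_det _).mpr hdetBr.isUnit))
      simpa using this
    have hc' : (0 : ℝ) < (c : ℝ)⁻¹ := inv_pos.mpr (by exact_mod_cast hc)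
    have := h1.smul hc'
    rwa [smul_smul, inv_mul_cancel₀ (by exact_mod_cast hc.ne'), one_smul] at this
  refine ⟨hsymm', hpos', ?_, fun i ↦ ?_⟩
  · have h1 : S'.det * W.det = 1 := by rw [← Matrix.det_mul, hW, Matrix.det_one]
    rcases Int.eq_one_or_neg_one_of_mul_eq_one h1 with h | h
    · exact h
    · have h2 := hpos'.det_pos
      have h3 := RingHom.map_det (Int.castRingHom ℝ) S'
      rw [show (Int.castRingHom ℝ).mapMatrix S' = S'.map ((↑) : ℤ → ℝ) from rfl] at h3
      rw [← h3, h] at h2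
      norm_num at h2
  · have h1 := even_quadForm hsymm hev (B *ᵥ Pi.single i 1)
    rw [bilin_mulVec, hB] at h1
    simp only [single_dotProduct, one_mul, Matrix.mulVec_single_one, Matrix.col_apply,
      Matrix.smul_apply, smul_eq_mul] at h1
    exact (Int.even_mul.mp h1).resolve_left (by simpa using hodd)

variable [Fact p.Prime]

lemma exists_neighbor (hp : p ≠ 2) (hS : IsPosDefEvenUnimodular S) {w : Fin m → ℤ}
    (hw : (p : ℤ) ^ 2 ∣ w ⬝ᵥ S *ᵥ w) (hw0 : redVec p w ≠ 0) :
    ∃ S' B : Matrix (Fin m) (Fin m) ℤ, IsPosDefEvenUnimodular S' ∧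
      Bᵀ * S * B = (p : ℤ) ^ 2 • S' ∧ ∀ x, x ∈ neighborLattice p S w ↔ ∃ y, B *ᵥ y = x := by
  have hpz : (p : ℤ) ≠ 0 := by exact_mod_cast (Fact.out : p.Prime).ne_zero
  have hp0 : (p : ℤ) ^ 2 ≠ 0 := pow_ne_zero _ hpz
  obtain ⟨B, hB⟩ := exists_matrix_range_eq p S w
  have hcol : ∀ Y : Matrix (Fin m) (Fin m) ℤ, (∀ j, Y.col j ∈ neighborLattice p S w) →
      ∃ X, B * X = Y := by
    intro Y hY
    choose X hX using fun j ↦ (hB _).mp (hY j)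
    refine ⟨Matrix.of fun i j ↦ X j i, ?_⟩
    ext i j
    exact congrFun (hX j) i
  obtain ⟨X, hX⟩ := hcol ((p : ℤ) ^ 2 • 1) (fun j ↦ by
    have := sq_smul_mem_neighborLattice (p := p) (S := S) w (Pi.single j 1)
    convert this using 1
    ext i
    rw [Matrix.col_apply, Matrix.smul_apply, Pi.smul_apply, Matrix.one_apply, Pi.single_apply])
  have hX' := mul_eq_smul_one_comm hp0 hX
  have hdetB : B.det ≠ 0 := by
    intro h0
    have := congrArg Matrix.det hX
    rw [Matrix.det_mul, h0, zero_mul, Matrix.det_smul, Matrix.det_one, mul_one] at this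
    exact pow_ne_zero _ hp0 this.symm
  have hunit : IsUnit S.det := by rw [hS.2.2.1]; exact isUnit_one
  have hinv : (S⁻¹)ᵀ = S⁻¹ := by rw [Matrix.transpose_nonsing_inv, hS.1.eq]
  obtain ⟨W, hW⟩ := hcol (S⁻¹ * Xᵀ) (fun j ↦
    mem_neighborLattice_of_dvd_bilin hS.1 hS.2.2.1 hw hw0 (by
      intro x hx
      obtain ⟨y, rfl⟩ := (hB x).mp hx
      rw [← Matrix.mulVec_single_one, bilin_mulVec_left, Matrix.transpose_mul,
        Matrix.transpose_transpose, hinv, Matrix.mul_assoc, Matrix.nonsing_inv_mul _ hunit, mul_one,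
        Matrix.mulVec_mulVec, hX', Matrix.smul_mulVec, dotProduct_smul]
      exact Dvd.intro _ rfl))
  have hdvd : ∀ i j, (p : ℤ) ^ 2 ∣ (Bᵀ * S * B) i j := by
    intro i j
    have := dvd_bilin_of_mem_neighborLattice hS.1 hw ((hB _).mpr ⟨Pi.single i 1, rfl⟩)
      ((hB _).mpr ⟨Pi.single j 1, rfl⟩)
    rw [bilin_mulVec] at this
    simpa using this
  choose S' hS' using hdvd
  have hBS : Bᵀ * S * B = (p : ℤ) ^ 2 • Matrix.of S' := by
    ext i j; simp [hS']
  refine ⟨Matrix.of S', B, ?_, hBS, hB⟩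
  refine isPosDefEvenUnimodular_of_similitude (W := W) (by positivity) ?_ hS hBS hdetB ?_
  · exact (Int.odd_coe_nat p |>.mpr ((Fact.out : p.Prime).odd_of_ne_two hp)).pow
  · apply smul_right_injective _ hp0
    dsimp only
    rw [← Matrix.smul_mul, ← hBS, Matrix.mul_assoc, hW, Matrix.mul_assoc, ← Matrix.mul_assoc S,
      Matrix.mul_nonsing_inv _ hunit, one_mul, ← Matrix.transpose_mul, hX', Matrix.transpose_smul,
      Matrix.transpose_one]

lemma exists_neighbor_mem (hp : p ≠ 2) {R : Finset (Matrix (Fin m) (Fin m) ℤ)}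
    (hrep : ∀ T : Matrix (Fin m) (Fin m) ℤ, IsPosDefEvenUnimodular T → ∃ S ∈ R, MatEquiv S T)
    (hS : IsPosDefEvenUnimodular S) {w : Fin m → ℤ}
    (hw : (p : ℤ) ^ 2 ∣ w ⬝ᵥ S *ᵥ w) (hw0 : redVec p w ≠ 0) :
    ∃ S' ∈ R, ∃ B : Matrix (Fin m) (Fin m) ℤ,
      Bᵀ * S * B = (p : ℤ) ^ 2 • S' ∧ ∀ x, x ∈ neighborLattice p S w ↔ ∃ y, B *ᵥ y = x := by
  obtain ⟨T, B, hT, hBT, hB⟩ := exists_neighbor hp hS hw hw0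
  obtain ⟨S', hS', U, hU, rfl⟩ := hrep T hT
  refine ⟨S', hS', B * U⁻¹, ?_, fun x ↦ (hB x).trans ?_⟩
  · have hUT : IsUnit Uᵀ.det := by rwa [Matrix.det_transpose]
    rw [Matrix.transpose_mul, Matrix.transpose_nonsing_inv,
      show (Uᵀ)⁻¹ * Bᵀ * S * (B * U⁻¹) = (Uᵀ)⁻¹ * (Bᵀ * S * B) * U⁻¹ by
        simp only [Matrix.mul_assoc], hBT, Matrix.mul_smul, Matrix.smul_mul]
    congr 1
    rw [Matrix.mul_assoc, Matrix.mul_nonsing_inv_cancel_right _ _ hU,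
      Matrix.nonsing_inv_mul_cancel_left _ _ hUT]
  · constructor
    · rintro ⟨y, rfl⟩
      exact ⟨U *ᵥ y, by rw [Matrix.mulVec_mulVec, Matrix.mul_assoc, Matrix.nonsing_inv_mul _ hU,
        mul_one]⟩
    · rintro ⟨y, rfl⟩
      exact ⟨U⁻¹ *ᵥ y, Matrix.mulVec_mulVec _ _ _⟩

/-- Two similitudes onto the same lattice differ by an isometry of the source lattices. -/
lemma exists_unit_of_same_range {S₁ S₂ B₁ B₂ : Matrix (Fin m) (Fin m) ℤ} {c : ℤ} (hc : c ≠ 0)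
    (hdet₁ : S₁.det = 1)
    (h₁ : B₁ᵀ * S * B₁ = c • S₁) (h₂ : B₂ᵀ * S * B₂ = c • S₂)
    (hrange : ∀ x, (∃ y, B₁ *ᵥ y = x) ↔ ∃ y, B₂ *ᵥ y = x) :
    ∃ W : Matrix (Fin m) (Fin m) ℤ, IsUnit W.det ∧ B₂ = B₁ * W ∧ S₂ = Wᵀ * S₁ * W := by
  have hfactor : ∀ B C : Matrix (Fin m) (Fin m) ℤ, (∀ x, (∃ y, B *ᵥ y = x) → ∃ y, C *ᵥ y = x) →
      ∃ W, B = C * W := by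
    intro B C h
    choose X hX using fun j ↦ h _ ⟨Pi.single j 1, rfl⟩
    refine ⟨Matrix.of fun i j ↦ X j i, ?_⟩
    ext i j
    have := (congrFun (hX j) i).symm
    rw [Matrix.mulVec_single_one] at this
    exact this
  obtain ⟨W, hW⟩ := hfactor B₂ B₁ fun x ↦ (hrange x).mpr
  obtain ⟨V, hV⟩ := hfactor B₁ B₂ fun x ↦ (hrange x).mp
  have hWV : W * V = 1 := by
    refine mul_left_cancel_of_mul_eq_smul_one hc (similitude_inv_mul hdet₁ h₁) ?_
    rw [← Matrix.mul_assoc, ← hW, ← hV, mul_one]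
  refine ⟨W, IsUnit.of_mul_eq_one _ (by rw [← Matrix.det_mul, hWV, Matrix.det_one]), hW, ?_⟩
  apply smul_right_injective _ hc
  dsimp only
  rw [← h₂, hW, Matrix.transpose_mul, ← Matrix.smul_mul, ← Matrix.mul_smul, ← h₁]
  simp only [Matrix.mul_assoc]

end NeighborClass

section GaussianSummability

lemma summable_pi_prod {f : ℤ → ℝ} (hf : ∀ n, 0 ≤ f n) (hs : Summable f) (m : ℕ) :
    Summable fun x : Fin m → ℤ ↦ ∏ i, f (x i) := by
  induction m with
  | zero => exact Summable.of_finite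
  | succ m ih =>
    rw [← (Fin.consEquiv fun _ ↦ ℤ).summable_iff]
    have := hs.mul_of_nonneg ih hf fun x ↦ Finset.prod_nonneg fun i _ ↦ hf _
    refine this.congr fun x ↦ ?_
    simp [Fin.consEquiv, Fin.prod_univ_succ]

lemma summable_exp_neg_mul_sq {a : ℝ} (ha : 0 < a) :
    Summable fun n : ℤ ↦ rexp (-a * (n : ℝ) ^ 2) := by
  have h : Summable fun n : ℕ ↦ rexp (-a * (n : ℝ) ^ 2) := by
    refine Summable.of_nonneg_of_le (fun _ ↦ (Real.exp_pos _).le) (fun n ↦ ?_)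
      (Real.summable_exp_nat_mul_iff.mpr (neg_neg_of_pos ha))
    rw [Real.exp_le_exp]
    have : (n : ℝ) ≤ (n : ℝ) ^ 2 := by
      have : n ≤ n ^ 2 := Nat.le_self_pow two_ne_zero n
      exact_mod_cast this
    nlinarith
  exact Summable.of_nat_of_neg (by simpa using h) (by simpa using h)

lemma summable_exp_neg_mul_sum_sq (m : ℕ) {a : ℝ} (ha : 0 < a) :
    Summable fun x : Fin m → ℤ ↦ rexp (-a * ∑ i, (x i : ℝ) ^ 2) := by
  refine (summable_pi_prod (fun _ ↦ (Real.exp_pos _).le) (summable_exp_neg_mul_sq ha) m).congr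
    fun x ↦ ?_
  rw [← Real.exp_sum, Finset.mul_sum]

lemma Matrix.PosDef.exists_pos_mul_sum_sq_le {m : ℕ} {A : Matrix (Fin m) (Fin m) ℝ}
    (hA : A.PosDef) :
    ∃ c : ℝ, 0 < c ∧ ∀ x : Fin m → ℝ, c * ∑ i, x i ^ 2 ≤ x ⬝ᵥ A *ᵥ x := by
  have hcont : Continuous fun x : Fin m → ℝ ↦ x ⬝ᵥ A *ᵥ x := by fun_prop
  have hcont' : Continuous fun x : Fin m → ℝ ↦ ∑ i, x i ^ 2 := by fun_prop
  have hposs : ∀ x : Fin m → ℝ, x ≠ 0 → 0 < x ⬝ᵥ A *ᵥ x := fun x hx ↦ by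
    simpa using hA.dotProduct_mulVec_pos hx
  have hsq : ∀ x : Fin m → ℝ, x ≠ 0 → 0 < ∑ i, x i ^ 2 := by
    intro x hx
    obtain ⟨i, hi⟩ := Function.ne_iff.mp hx
    exact Finset.sum_pos' (fun _ _ ↦ sq_nonneg _) ⟨i, Finset.mem_univ _, by
      have : x i ≠ 0 := hi
      positivity⟩
  rcases (Metric.sphere (0 : Fin m → ℝ) 1).eq_empty_or_nonempty with he | hne
  · refine ⟨1, one_pos, fun x ↦ ?_⟩
    obtain rfl : x = 0 := by
      by_contra hx
      have : ‖x‖⁻¹ • x ∈ Metric.sphere (0 : Fin m → ℝ) 1 := by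
        rw [mem_sphere_zero_iff_norm, norm_smul, norm_inv, norm_norm,
          inv_mul_cancel₀ (norm_ne_zero_iff.mpr hx)]
      rw [he] at this
      exact this
    simp
  obtain ⟨z, hz, hmin⟩ := (isCompact_sphere (0 : Fin m → ℝ) 1).exists_isMinOn hne
    (f := fun x ↦ (x ⬝ᵥ A *ᵥ x) / ∑ i, x i ^ 2)
    (hcont.continuousOn.div hcont'.continuousOn fun x hx ↦ (hsq x (by
      rintro rfl; simp at hx)).ne')
  have hz0 : z ≠ 0 := by rintro rfl; simp at hz
  refine ⟨_, div_pos (hposs z hz0) (hsq z hz0), fun x ↦ ?_⟩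
  by_cases hx : x = 0
  · simp [hx]
  have hn : ‖x‖⁻¹ ≠ 0 := inv_ne_zero (norm_ne_zero_iff.mpr hx)
  have hmem : ‖x‖⁻¹ • x ∈ Metric.sphere (0 : Fin m → ℝ) 1 := by
    rw [mem_sphere_zero_iff_norm, norm_smul, norm_inv, norm_norm,
      inv_mul_cancel₀ (norm_ne_zero_iff.mpr hx)]
  have h := hmin hmem
  have hrhs : ((‖x‖⁻¹ • x) ⬝ᵥ A *ᵥ (‖x‖⁻¹ • x)) / ∑ i, (‖x‖⁻¹ • x) i ^ 2
      = (x ⬝ᵥ A *ᵥ x) / ∑ i, x i ^ 2 := by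
    simp only [Matrix.mulVec_smul, dotProduct_smul, smul_dotProduct, smul_eq_mul, Pi.smul_apply,
      mul_pow, ← Finset.mul_sum]
    rw [← mul_assoc, ← pow_two, mul_div_mul_left _ _ (pow_ne_zero 2 hn)]
  simp only [mem_ofPred_eq, hrhs] at h
  exact (le_div_iff₀ (hsq x hx)).mp h

end GaussianSummability

section ThetaSeries

variable {m : ℕ} {S S' : Matrix (Fin m) (Fin m) ℤ}

lemma exists_pos_mul_sum_sq_le_quadForm (hS : (S.map ((↑) : ℤ → ℝ)).PosDef) :
    ∃ c : ℝ, 0 < c ∧ ∀ x : Fin m → ℤ, c * ∑ i, (x i : ℝ) ^ 2 ≤ ((x ⬝ᵥ S *ᵥ x : ℤ) : ℝ) := by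
  obtain ⟨c, hc, h⟩ := hS.exists_pos_mul_sum_sq_le
  refine ⟨c, hc, fun x ↦ ?_⟩
  rw [← dotProduct_map_cast]
  exact h _

lemma quadForm_nonneg (hS : (S.map ((↑) : ℤ → ℝ)).PosDef) (x : Fin m → ℤ) :
    0 ≤ x ⬝ᵥ S *ᵥ x := by
  obtain ⟨c, hc, h⟩ := exists_pos_mul_sum_sq_le_quadForm hS
  have : (0 : ℝ) ≤ ((x ⬝ᵥ S *ᵥ x : ℤ) : ℝ) := le_trans (by positivity) (h x)
  exact_mod_cast this

lemma summable_exp_neg_quadForm (hS : (S.map ((↑) : ℤ → ℝ)).PosDef) {a : ℝ} (ha : 0 < a) :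
    Summable fun x : Fin m → ℤ ↦ rexp (-a * ((x ⬝ᵥ S *ᵥ x : ℤ) : ℝ)) := by
  obtain ⟨c, hc, h⟩ := exists_pos_mul_sum_sq_le_quadForm hS
  refine Summable.of_nonneg_of_le (fun _ ↦ (Real.exp_pos _).le) (fun x ↦ ?_)
    (summable_exp_neg_mul_sum_sq m (mul_pos ha hc))
  rw [Real.exp_le_exp]
  nlinarith [h x]

lemma norm_theta_term (S : Matrix (Fin m) (Fin m) ℤ) (τ : ℂ) (x : Fin m → ℤ) :
    ‖cexp (π * I * τ * ((x ⬝ᵥ S *ᵥ x : ℤ) : ℂ))‖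
      = rexp (-(π * τ.im) * ((x ⬝ᵥ S *ᵥ x : ℤ) : ℝ)) := by
  rw [Complex.norm_exp]
  congr 1
  simp

lemma summable_norm_theta (hS : (S.map ((↑) : ℤ → ℝ)).PosDef) {τ : ℂ} (hτ : 0 < τ.im) :
    Summable fun x : Fin m → ℤ ↦ ‖cexp (π * I * τ * ((x ⬝ᵥ S *ᵥ x : ℤ) : ℂ))‖ := by
  simp_rw [norm_theta_term]
  exact summable_exp_neg_quadForm hS (by positivity)

lemma summable_theta (hS : (S.map ((↑) : ℤ → ℝ)).PosDef) {τ : ℂ} (hτ : 0 < τ.im) :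
    Summable fun x : Fin m → ℤ ↦ cexp (π * I * τ * ((x ⬝ᵥ S *ᵥ x : ℤ) : ℂ)) :=
  (summable_norm_theta hS hτ).of_norm

lemma finite_quadForm_le (hS : (S.map ((↑) : ℤ → ℝ)).PosDef) (C : ℤ) :
    {x : Fin m → ℤ | x ⬝ᵥ S *ᵥ x ≤ C}.Finite := by
  have h := (summable_exp_neg_quadForm hS one_pos).tendsto_cofinite_zero
  have h2 := h.eventually (gt_mem_nhds (Real.exp_pos (-1 * (C : ℝ))))
  rw [Filter.eventually_cofinite] at h2
  refine h2.subset fun x hx ↦ ?_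
  simp only [mem_ofPred_eq, not_lt, Real.exp_le_exp] at hx ⊢
  have : ((x ⬝ᵥ S *ᵥ x : ℤ) : ℝ) ≤ C := by exact_mod_cast hx
  linarith

lemma finite_similitudes (hS : (S.map ((↑) : ℤ → ℝ)).PosDef) (T : Matrix (Fin m) (Fin m) ℤ) :
    {B : Matrix (Fin m) (Fin m) ℤ | Bᵀ * S * B = T}.Finite := by
  have h : (Set.univ.pi fun j ↦ {x : Fin m → ℤ | x ⬝ᵥ S *ᵥ x ≤ T j j}).Finite :=
    Set.Finite.pi fun j ↦ finite_quadForm_le hS _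
  refine Set.Finite.of_injOn (f := fun B : Matrix (Fin m) (Fin m) ℤ ↦ fun j ↦ B.col j) (t := _)
    ?_ ?_ h
  · rintro B rfl
    simp only [Set.mem_pi, mem_ofPred_eq]
    intro j _
    rw [← Matrix.mulVec_single_one, bilin_mulVec]
    simp
  · intro B _ C _ hBC
    ext i j
    exact congrFun (congrFun hBC j) i

lemma autCard_ne_zero (hS : (S.map ((↑) : ℤ → ℝ)).PosDef) : autCard S ≠ 0 := by
  have hfin : Finite {U : Matrix (Fin m) (Fin m) ℤ // IsUnit U.det ∧ Uᵀ * S * U = S} :=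
    ((finite_similitudes hS S).subset fun U hU ↦ hU.2).to_subtype
  have : Nonempty {U : Matrix (Fin m) (Fin m) ℤ // IsUnit U.det ∧ Uᵀ * S * U = S} :=
    ⟨⟨1, by simp, by simp⟩⟩
  exact Nat.card_pos.ne'

end ThetaSeries

section NeighborCount

variable {p m : ℕ} {S S' : Matrix (Fin m) (Fin m) ℤ}

/-- The similitudes of factor `p²` from `S'` to `S` whose reduction modulo `p` has rank one and
image spanned by `v`. -/
def NeighborMaps (p : ℕ) {m : ℕ} (S S' : Matrix (Fin m) (Fin m) ℤ) (v : Fin m → ZMod p) :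
    Set (Matrix (Fin m) (Fin m) ℤ) :=
  {B | Bᵀ * S * B = (p : ℤ) ^ 2 • S' ∧
    ∃ t : Fin m → ZMod p, t ≠ 0 ∧ redMat p B = Matrix.vecMulVec v t}

/-- Similitudes of factor `p²` from `S'` to `S` together with a factorization of their reduction
modulo `p` as a product of a column and a row. -/
def NeighborTriples (p : ℕ) {m : ℕ} (S S' : Matrix (Fin m) (Fin m) ℤ) :
    Set (Matrix (Fin m) (Fin m) ℤ × (Fin m → ZMod p) × (Fin m → ZMod p)) :=
  {B | B.1ᵀ * S * B.1 = (p : ℤ) ^ 2 • S' ∧ B.2.1 ≠ 0 ∧ B.2.2 ≠ 0 ∧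
    redMat p B.1 = Matrix.vecMulVec B.2.1 B.2.2}

lemma finite_neighborTriples [NeZero p] (hS : (S.map ((↑) : ℤ → ℝ)).PosDef) :
    (NeighborTriples p S S').Finite :=
  ((finite_similitudes hS ((p : ℤ) ^ 2 • S')).prod (Set.toFinite Set.univ)).subset
    fun _ hB ↦ ⟨hB.1, trivial⟩

lemma finite_neighborMaps (hS : (S.map ((↑) : ℤ → ℝ)).PosDef) (v : Fin m → ZMod p) :
    (NeighborMaps p S S' v).Finite :=
  (finite_similitudes hS ((p : ℤ) ^ 2 • S')).subset fun _ hB ↦ hB.1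

variable [Fact p.Prime]

lemma vecMulVec_left_injective {v t t' : Fin m → ZMod p} (hv : v ≠ 0)
    (h : Matrix.vecMulVec v t = Matrix.vecMulVec v t') : t = t' := by
  obtain ⟨i, hi⟩ := Function.ne_iff.mp hv
  ext j
  have := congrFun (congrFun h i) j
  exact mul_left_cancel₀ hi this

lemma card_neighborTriples (hS : (S.map ((↑) : ℤ → ℝ)).PosDef) :
    Nat.card (NeighborTriples p S S')
      = ∑ v : {v : Fin m → ZMod p // v ≠ 0}, Nat.card (NeighborMaps p S S' v) := by
  have : ∀ v : {v : Fin m → ZMod p // v ≠ 0}, Finite (NeighborMaps p S S' (v : Fin m → ZMod p)) :=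
    fun v ↦ (finite_neighborMaps hS v.1).to_subtype
  rw [← Nat.card_sigma]
  refine Nat.card_eq_of_bijective (fun B : NeighborTriples p S S' ↦
    (⟨⟨B.1.2.1, B.2.2.1⟩, ⟨B.1.1, B.2.1, B.1.2.2, B.2.2.2.1, B.2.2.2.2⟩⟩ :
      Σ v : {v : Fin m → ZMod p // v ≠ 0}, NeighborMaps p S S' v)) ⟨?_, ?_⟩
  · rintro ⟨⟨B, v, t⟩, h1, h2, h3, h4⟩ ⟨⟨B', v', t'⟩, h1', h2', h3', h4'⟩ h
    simp only [Sigma.mk.injEq, Subtype.mk.injEq] at h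
    obtain ⟨rfl, h⟩ := h
    obtain rfl := Subtype.mk.injEq _ _ _ _ ▸ eq_of_heq h
    obtain rfl := vecMulVec_left_injective h2 (h4.symm.trans h4')
    rfl
  · rintro ⟨⟨v, hv⟩, ⟨B, hB, t, ht, hBt⟩⟩
    exact ⟨⟨⟨B, v, t⟩, hB, hv, ht, hBt⟩, rfl⟩

lemma card_neighborTriples_le (hS' : IsPosDefEvenUnimodular S') (hS : IsPosDefEvenUnimodular S) :
    Nat.card (NeighborTriples p S S') ≤ Nat.card (NeighborTriples p S' S) := by
  have hfin : Finite (NeighborTriples p S' S) := (finite_neighborTriples hS'.2.1).to_subtype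
  have hp0 : (p : ℤ) ^ 2 ≠ 0 := pow_ne_zero _ (by exact_mod_cast (Fact.out : p.Prime).ne_zero)
  have hu : IsUnit S.det := by rw [hS.2.2.1]; exact isUnit_one
  have hu' : IsUnit S'.det := by rw [hS'.2.2.1]; exact isUnit_one
  have hinv : (S'⁻¹)ᵀ = S'⁻¹ := by rw [Matrix.transpose_nonsing_inv, hS'.1.eq]
  have hone : redMat p (1 : Matrix (Fin m) (Fin m) ℤ) = 1 := by
    ext i j; simp [redMat, Matrix.one_apply, apply_ite]
  have hri : redMat p S' * redMat p S'⁻¹ = 1 := by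
    rw [← redMat_mul, Matrix.mul_nonsing_inv _ hu', hone]
  have hri' : redMat p S⁻¹ * redMat p S = 1 := by
    rw [← redMat_mul, Matrix.nonsing_inv_mul _ hu, hone]
  have hne' : ∀ t : Fin m → ZMod p, redMat p S'⁻¹ *ᵥ t = 0 → t = 0 := by
    intro t ht
    have := congrArg (redMat p S' *ᵥ ·) ht
    simpa [Matrix.mulVec_mulVec, hri] using this
  have hne : ∀ t : Fin m → ZMod p, redMat p S *ᵥ t = 0 → t = 0 := by
    intro t ht
    have := congrArg (redMat p S⁻¹ *ᵥ ·) ht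
    simpa [Matrix.mulVec_mulVec, hri'] using this
  refine Nat.card_le_card_of_injective (fun B : NeighborTriples p S S' ↦
    (⟨⟨S'⁻¹ * B.1.1ᵀ * S, redMat p S'⁻¹ *ᵥ B.1.2.2, redMat p S *ᵥ B.1.2.1⟩, ?_⟩ :
      NeighborTriples p S' S)) ?_
  · obtain ⟨⟨B, v, t⟩, h1, h2, h3, h4⟩ := B
    dsimp only at h1 h2 h3 h4
    refine ⟨?_, fun h ↦ h3 (hne' _ h), fun h ↦ h2 (hne _ h), ?_⟩
    · have h5 := mul_eq_smul_one_comm hp0 (similitude_inv_mul hS'.2.2.1 h1)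
      simp only [Matrix.transpose_mul, Matrix.transpose_transpose, hinv, hS.1.eq,
        Matrix.mul_assoc] at h5 ⊢
      rw [← Matrix.mul_assoc S', Matrix.mul_nonsing_inv _ hu', one_mul, h5, Matrix.mul_smul,
        mul_one]
    · dsimp only
      rw [redMat_mul, redMat_mul, redMat_transpose, h4, Matrix.transpose_vecMulVec,
        Matrix.mul_vecMulVec, Matrix.vecMulVec_mul, ← Matrix.mulVec_transpose,
        (redMat_isSymm hS.1).eq]
  · rintro ⟨⟨B, v, t⟩, h1, h2, h3, h4⟩ ⟨⟨B', v', t'⟩, h1', h2', h3', h4'⟩ h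
    have h' := congrArg Subtype.val h
    have hB : S'⁻¹ * Bᵀ * S = S'⁻¹ * B'ᵀ * S := congrArg Prod.fst h'
    have ht : redMat p S'⁻¹ *ᵥ t = redMat p S'⁻¹ *ᵥ t' := congrArg (fun q ↦ q.2.1) h'
    have hv : redMat p S *ᵥ v = redMat p S *ᵥ v' := congrArg (fun q ↦ q.2.2) h'
    refine Subtype.ext (Prod.ext ?_ (Prod.ext ?_ ?_))
    · have := congrArg (fun M ↦ S' * M * S⁻¹) hB
      simp only [Matrix.mul_assoc, Matrix.mul_nonsing_inv _ hu, mul_one] at this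
      simp only [← Matrix.mul_assoc, Matrix.mul_nonsing_inv _ hu', one_mul] at this
      exact Matrix.transpose_injective this
    · exact sub_eq_zero.mp (hne _ (by rw [Matrix.mulVec_sub, hv, sub_self]))
    · exact sub_eq_zero.mp (hne' _ (by rw [Matrix.mulVec_sub, ht, sub_self]))

lemma card_neighborTriples_comm (hS : IsPosDefEvenUnimodular S) (hS' : IsPosDefEvenUnimodular S') :
    Nat.card (NeighborTriples p S S') = Nat.card (NeighborTriples p S' S) :=
  le_antisymm (card_neighborTriples_le hS' hS) (card_neighborTriples_le hS hS')

lemma neighborMaps_eq_empty {v : Fin m → ZMod p} (hv : v ⬝ᵥ redMat p S *ᵥ v ≠ 0) :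
    NeighborMaps p S S' v = ∅ := by
  rw [Set.eq_empty_iff_forall_notMem]
  rintro B ⟨hB, t, ht, hBt⟩
  obtain ⟨i, hi⟩ := Function.ne_iff.mp ht
  have h1 := congrArg (redMat p) hB
  rw [redMat_mul, redMat_mul, redMat_transpose, hBt] at h1
  have h2 := congrFun (congrFun h1 i) i
  rw [Matrix.transpose_vecMulVec, Matrix.vecMulVec_mul, Matrix.vecMulVec_mul_vecMulVec,
    ← Matrix.dotProduct_mulVec] at h2
  have h3 : redMat p ((p : ℤ) ^ 2 • S') i i = 0 := by
    rw [redMat, Matrix.map_apply, Matrix.smul_apply, smul_eq_mul]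
    simp
  rw [h3, Matrix.vecMulVec_apply, Pi.smul_apply, smul_eq_mul, mul_eq_zero, mul_eq_zero] at h2
  rcases h2 with h2 | h2 | h2
  · exact hi h2
  · exact hv h2
  · exact hi h2

/-- Membership in the neighbor lattice of a nonzero isotropic vector `v` modulo `p`,
independently of the choice of a lift of `v`. -/
def InNeighbor (S : Matrix (Fin m) (Fin m) ℤ) (v : Fin m → ZMod p) (x : Fin m → ℤ) : Prop :=
  (redVec p x ≠ 0 ∧ (∃ c : ZMod p, redVec p x = c • v) ∧ (p : ℤ) ^ 2 ∣ x ⬝ᵥ S *ᵥ x) ∨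
    ∃ u : Fin m → ℤ, x = (p : ℤ) • u ∧ v ⬝ᵥ redMat p S *ᵥ redVec p u = 0

open Classical in
lemma exists_neighbor_sum (hp : p ≠ 2) {R : Finset (Matrix (Fin m) (Fin m) ℤ)}
    (hR : ∀ S ∈ R, IsPosDefEvenUnimodular S)
    (huniq : ∀ S ∈ R, ∀ S' ∈ R, MatEquiv S S' → S = S')
    (hrep : ∀ T : Matrix (Fin m) (Fin m) ℤ, IsPosDefEvenUnimodular T → ∃ S ∈ R, MatEquiv S T)
    (hS : S ∈ R) {v : Fin m → ZMod p} (hv : v ≠ 0) (hiso : v ⬝ᵥ redMat p S *ᵥ v = 0) :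
    ∃ S₁ ∈ R,
      (∀ h : Matrix (Fin m) (Fin m) ℤ → ℂ,
        ∑ S' ∈ R, (autCard S' : ℂ)⁻¹ * Nat.card (NeighborMaps p S S' v) * h S' = h S₁) ∧
      ∀ τ : ℂ, thetaSeries S₁ τ = ∑' x : Fin m → ℤ, if InNeighbor S v x then
        cexp (π * I * (τ / (p : ℂ) ^ 2) * ((x ⬝ᵥ S *ᵥ x : ℤ) : ℂ)) else 0 := by
  have hpz : (p : ℤ) ≠ 0 := by exact_mod_cast (Fact.out : p.Prime).ne_zero
  have hp0 : (p : ℤ) ^ 2 ≠ 0 := pow_ne_zero _ hpz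
  have hS0 := hR S hS
  obtain ⟨w, rfl, hw⟩ := exists_lift_isotropic hp hS0.1 hS0.2.2.1 hv hiso
  obtain ⟨S₁, hS₁, B₁, hB₁, hr₁⟩ := exists_neighbor_mem hp hrep hS0 hw hv
  have hS₁0 := hR S₁ hS₁
  have hunit : ∀ S' ∈ R, ∀ B ∈ NeighborMaps p S S' (redVec p w),
      ∃ W : Matrix (Fin m) (Fin m) ℤ, IsUnit W.det ∧ B = B₁ * W ∧ S' = Wᵀ * S₁ * W := by
    rintro S' hS' B ⟨hB, t, ht, hBt⟩
    exact exists_unit_of_same_range hp0 hS₁0.2.2.1 hB₁ hB fun x ↦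
      (hr₁ x).symm.trans (range_of_redMat_eq_vecMulVec hp hS0.1 (hR S' hS').2.2.1 hw hv hB ht hBt x)
  have hcancel : ∀ C D : Matrix (Fin m) (Fin m) ℤ, B₁ * C = B₁ * D → C = D := fun C D ↦
    mul_left_cancel_of_mul_eq_smul_one hp0 (similitude_inv_mul hS₁0.2.2.1 hB₁)
  refine ⟨S₁, hS₁, fun h ↦ ?_, fun τ ↦ ?_⟩
  · rw [Finset.sum_eq_single_of_mem S₁ hS₁]
    · have : autCard S₁ = Nat.card (NeighborMaps p S S₁ (redVec p w)) := by
        refine Nat.card_eq_of_bijective (fun W ↦ ⟨B₁ * W.1, ?_⟩) ⟨?_, ?_⟩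
        · obtain ⟨W, hW, hWS⟩ := W
          refine ⟨?_, redMat_eq_vecMulVec_of_range hv fun x ↦ (hr₁ x).trans ?_⟩
          · rw [Matrix.transpose_mul, show Wᵀ * B₁ᵀ * S * (B₁ * W) = Wᵀ * (B₁ᵀ * S * B₁) * W by
              simp only [Matrix.mul_assoc], hB₁, Matrix.mul_smul, Matrix.smul_mul, hWS]
          · constructor
            · rintro ⟨y, rfl⟩
              exact ⟨W⁻¹ *ᵥ y, by rw [Matrix.mulVec_mulVec,
                Matrix.mul_nonsing_inv_cancel_right _ _ hW]⟩
            · rintro ⟨y, rfl⟩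
              exact ⟨W *ᵥ y, Matrix.mulVec_mulVec _ _ _⟩
        · intro W W' hWW
          exact Subtype.ext (hcancel _ _ (congrArg Subtype.val hWW))
        · rintro ⟨B, hB⟩
          obtain ⟨W, hW, rfl, hWS⟩ := hunit S₁ hS₁ B hB
          exact ⟨⟨W, hW, hWS.symm⟩, rfl⟩
      rw [← this, inv_mul_cancel₀, one_mul]
      exact_mod_cast autCard_ne_zero hS₁0.2.1
    · intro S' hS' hne
      have : IsEmpty (NeighborMaps p S S' (redVec p w)) := by
        refine ⟨fun B ↦ hne ?_⟩
        obtain ⟨W, hW, -, hWS⟩ := hunit S' hS' B.1 B.2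
        exact (huniq S₁ hS₁ S' hS' ⟨W, hW, hWS⟩).symm
      simp
  · have hinj : Function.Injective fun y : Fin m → ℤ ↦ B₁ *ᵥ y := by
      intro y y' hyy
      have := congrArg ((S₁⁻¹ * B₁ᵀ * S) *ᵥ ·) hyy
      simp only [Matrix.mulVec_mulVec, similitude_inv_mul hS₁0.2.2.1 hB₁, Matrix.smul_mulVec,
        Matrix.one_mulVec] at this
      exact smul_right_injective _ hp0 this
    rw [← hinj.tsum_eq]
    · refine tsum_congr fun y ↦ ?_
      have hy : InNeighbor S (redVec p w) (B₁ *ᵥ y) :=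
        (mem_neighborLattice_iff hp hS0.1 hw hv).mp ((hr₁ _).mpr ⟨y, rfl⟩)
      rw [if_pos hy, bilin_mulVec, hB₁, Matrix.smul_mulVec, dotProduct_smul, smul_eq_mul]
      congr 1
      have : (p : ℂ) ≠ 0 := by exact_mod_cast hpz
      push_cast
      field_simp
    · intro x hx
      rw [Function.mem_support] at hx
      exact (hr₁ x).mp ((mem_neighborLattice_iff hp hS0.1 hw hv).mpr (by
        by_contra hcon
        exact hx (if_neg hcon)))

end NeighborCount

section HeckeOperator

/-- The Hecke operator at `p²` in weight `k` and level one, written out on translates. -/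
def heckeSq (p k : ℕ) (f : ℂ → ℂ) (τ : ℂ) : ℂ :=
  ((p : ℂ) ^ 2)⁻¹ * ∑ b ∈ Finset.range (p ^ 2), f ((τ + b) / (p : ℂ) ^ 2)
    + (p : ℂ) ^ k / (p : ℂ) ^ 2 * ∑ b ∈ Finset.range p, f (τ + b / p)
    + ((p : ℂ) ^ k) ^ 2 / (p : ℂ) ^ 2 * f ((p : ℂ) ^ 2 * τ)

lemma sum_range_exp_mul {N : ℕ} (hN : Odd N) {q : ℤ} (hq : Even q) :
    ∑ b ∈ Finset.range N, cexp (π * I * ((b : ℂ) / N) * q) =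
      if (N : ℤ) ∣ q then (N : ℂ) else 0 := by
  have hN0 : (N : ℂ) ≠ 0 := by exact_mod_cast hN.pos.ne'
  obtain ⟨r, rfl⟩ := hq.two_dvd
  have hterm : ∀ b : ℕ, cexp (π * I * ((b : ℂ) / N) * ((2 * r : ℤ) : ℂ))
      = cexp (2 * π * I * (r / N)) ^ b := by
    intro b
    rw [← Complex.exp_nat_mul]
    congr 1
    push_cast
    ring
  simp_rw [hterm]
  have hdvd : (N : ℤ) ∣ 2 * r ↔ (N : ℤ) ∣ r := by
    refine ⟨fun h ↦ IsCoprime.dvd_of_dvd_mul_left ?_ h, fun h ↦ h.mul_left _⟩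
    have := (Nat.coprime_two_right.mpr hN)
    exact_mod_cast Nat.isCoprime_iff_coprime.mpr this
  simp only [hdvd]
  have hone : cexp (2 * π * I * (r / N)) = 1 ↔ (N : ℤ) ∣ r := by
    rw [Complex.exp_eq_one_iff]
    have h2 : (2 * π * I : ℂ) ≠ 0 := Complex.two_pi_I_ne_zero
    constructor
    · rintro ⟨n, hn⟩
      refine ⟨n, ?_⟩
      rw [mul_comm (n : ℂ)] at hn
      have := mul_left_cancel₀ h2 hn
      rw [div_eq_iff hN0, mul_comm] at this
      exact_mod_cast this
    · rintro ⟨n, rfl⟩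
      refine ⟨n, ?_⟩
      push_cast
      field_simp
  split_ifs with h
  · rw [hone.mpr h]; simp
  · have h1 : cexp (2 * π * I * (r / N)) ≠ 1 := fun h' ↦ h (hone.mp h')
    have h3 : cexp (2 * π * I * (r / N)) ^ N = 1 := by
      rw [← Complex.exp_nat_mul, Complex.exp_eq_one_iff]
      exact ⟨r, by field_simp⟩
    rw [geom_sum_eq h1, h3, sub_self, zero_div]

variable {p m : ℕ} {S S' : Matrix (Fin m) (Fin m) ℤ}

lemma sum_range_thetaSeries (hS : IsPosDefEvenUnimodular S) {N : ℕ} (hN : Odd N) {τ : ℂ}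
    (hτ : 0 < τ.im) :
    ∑ b ∈ Finset.range N, thetaSeries S (τ + b / N) = N * ∑' x : Fin m → ℤ,
      if (N : ℤ) ∣ x ⬝ᵥ S *ᵥ x then cexp (π * I * τ * ((x ⬝ᵥ S *ᵥ x : ℤ) : ℂ)) else 0 := by
  unfold thetaSeries
  rw [← Summable.tsum_finsetSum, ← tsum_mul_left]
  · refine tsum_congr fun x ↦ ?_
    have := sum_range_exp_mul hN (even_quadForm hS.1 hS.2.2.2 x)
    simp_rw [mul_add, add_mul, Complex.exp_add, ← Finset.mul_sum, this]
    split_ifs <;> ring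
  · intro b _
    refine summable_theta hS.2.1 ?_
    have : ((b : ℂ) / N).im = 0 := by
      rw [show (b : ℂ) / N = ((b / N : ℝ) : ℂ) by push_cast; rfl]
      exact Complex.ofReal_im _
    rw [Complex.add_im, this, add_zero]
    exact hτ

variable [Fact p.Prime]

open Classical in
/-- The number of neighbors (counted through nonzero isotropic vectors) containing a given
vector. -/
def neighborMult (p : ℕ) [Fact p.Prime] {m : ℕ} (S : Matrix (Fin m) (Fin m) ℤ)
    (x : Fin m → ℤ) : ℕ :=
  (Finset.univ.filter fun v : Fin m → ZMod p ↦
    v ≠ 0 ∧ v ⬝ᵥ redMat p S *ᵥ v = 0 ∧ InNeighbor S v x).card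

lemma neighborMult_of_ne {x : Fin m → ℤ} (hx : redVec p x ≠ 0) :
    neighborMult p S x = if (p : ℤ) ^ 2 ∣ x ⬝ᵥ S *ᵥ x then p - 1 else 0 := by
  classical
  have hin : ∀ v : Fin m → ZMod p, InNeighbor S v x ↔
      (∃ c : ZMod p, redVec p x = c • v) ∧ (p : ℤ) ^ 2 ∣ x ⬝ᵥ S *ᵥ x := by
    intro v
    refine ⟨?_, fun h ↦ Or.inl ⟨hx, h⟩⟩
    rintro (h | ⟨u, rfl, -⟩)
    · exact h.2
    · exact absurd (redVec_eq_zero_iff.mpr ⟨u, rfl⟩) hx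
  unfold neighborMult
  simp_rw [hin]
  split_ifs with hQ
  · have hiso : redVec p x ⬝ᵥ redMat p S *ᵥ redVec p x = 0 :=
      dvd_bilin_iff.mp ((Dvd.intro_left _ (pow_two (p : ℤ)).symm).trans hQ)
    have : (Finset.univ.filter fun v : Fin m → ZMod p ↦ v ≠ 0 ∧ v ⬝ᵥ redMat p S *ᵥ v = 0 ∧
        (∃ c : ZMod p, redVec p x = c • v) ∧ (p : ℤ) ^ 2 ∣ x ⬝ᵥ S *ᵥ x)
        = Finset.univ.image fun c : (ZMod p)ˣ ↦ (c : ZMod p) • redVec p x := by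
      ext v
      simp only [Finset.mem_filter, Finset.mem_univ, true_and, Finset.mem_image]
      constructor
      · rintro ⟨-, -, ⟨c, hc⟩, -⟩
        have hc0 : c ≠ 0 := by rintro rfl; rw [zero_smul] at hc; exact hx hc
        exact ⟨(Units.mk0 c hc0)⁻¹, by rw [hc, smul_smul]; simp [hc0]⟩
      · rintro ⟨c, rfl⟩
        refine ⟨smul_ne_zero c.ne_zero hx, ?_, ⟨(c⁻¹ : (ZMod p)ˣ), by
          rw [smul_smul, Units.inv_mul, one_smul]⟩, hQ⟩
        rw [Matrix.mulVec_smul, dotProduct_smul, smul_dotProduct, hiso, smul_zero, smul_zero]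
    rw [this, Finset.card_image_of_injective, Finset.card_univ, ZMod.card_units]
    intro c d hcd
    exact Units.ext (smul_left_injective _ hx hcd)
  · simp [hQ]

lemma neighborMult_smul (hp : p ≠ 2) {k : ℕ} (hmk : m = 2 * k) (hk : Even k)
    (hS : S.IsSymm) (hdet : S.det = 1) (u : Fin m → ℤ) :
    (p : ℂ) ^ 2 * (neighborMult p S ((p : ℤ) • u) + 1)
      = (p : ℂ) ^ m * (if redVec p u = 0 then (p : ℂ) else 1)
        + (p : ℂ) ^ k * (if (p : ℤ) ∣ u ⬝ᵥ S *ᵥ u then (p : ℂ) * p - p else 0) := by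
  classical
  have hpz : (p : ℤ) ≠ 0 := by exact_mod_cast (Fact.out : p.Prime).ne_zero
  have hin : ∀ v : Fin m → ZMod p, InNeighbor S v ((p : ℤ) • u) ↔
      v ⬝ᵥ redMat p S *ᵥ redVec p u = 0 := by
    intro v
    refine ⟨?_, fun h ↦ Or.inr ⟨u, rfl, h⟩⟩
    rintro (h | ⟨u', hu, h⟩)
    · exact absurd (redVec_eq_zero_iff.mpr ⟨u, rfl⟩) h.1
    · rwa [smul_right_injective _ hpz hu]
  have h := card_isotropic_orthogonal hp hmk hk (redMat_isSymm (p := p) hS)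
    (redMat_det_one (p := p) hdet) (redVec p u)
  simp_rw [dvd_bilin_iff]
  rw [← h]
  congr 1
  unfold neighborMult
  simp_rw [hin]
  have : (Finset.univ.filter fun v : Fin m → ZMod p ↦ v ⬝ᵥ redMat p S *ᵥ v = 0 ∧
      v ⬝ᵥ redMat p S *ᵥ redVec p u = 0) = insert 0 (Finset.univ.filter fun v : Fin m → ZMod p ↦
        v ≠ 0 ∧ v ⬝ᵥ redMat p S *ᵥ v = 0 ∧ v ⬝ᵥ redMat p S *ᵥ redVec p u = 0) := by
    ext v
    by_cases hv : v = 0 <;> simp [hv]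
  rw [this, Finset.card_insert_of_notMem (by simp)]
  push_cast
  rfl

lemma neighborMult_le (S : Matrix (Fin m) (Fin m) ℤ) (x : Fin m → ℤ) :
    neighborMult p S x ≤ Fintype.card (Fin m → ZMod p) := Finset.card_le_univ _

lemma summable_neighborMult_mul (hS : (S.map ((↑) : ℤ → ℝ)).PosDef) {τ : ℂ} (hτ : 0 < τ.im) :
    Summable fun x : Fin m → ℤ ↦
      (neighborMult p S x : ℂ) * cexp (π * I * τ * ((x ⬝ᵥ S *ᵥ x : ℤ) : ℂ)) := by
  refine Summable.of_norm_bounded ((summable_norm_theta hS hτ).mul_left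
    (Fintype.card (Fin m → ZMod p) : ℝ)) fun x ↦ ?_
  rw [norm_mul, Complex.norm_natCast]
  gcongr
  exact neighborMult_le S x

lemma summable_ite_theta (hS : (S.map ((↑) : ℤ → ℝ)).PosDef) {τ : ℂ} (hτ : 0 < τ.im)
    (P : (Fin m → ℤ) → Prop) [DecidablePred P] :
    Summable fun x : Fin m → ℤ ↦
      if P x then cexp (π * I * τ * ((x ⬝ᵥ S *ᵥ x : ℤ) : ℂ)) else 0 := by
  refine Summable.of_norm_bounded (summable_norm_theta hS hτ) fun x ↦ ?_
  split_ifs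
  · exact le_rfl
  · simp

lemma tsum_neighborMult (hp : p ≠ 2) {k : ℕ} (hmk : m = 2 * k) (hk : Even k)
    (hS : IsPosDefEvenUnimodular S) {τ : ℂ} (hτ : 0 < τ.im) :
    ∑' x : Fin m → ℤ, (neighborMult p S x : ℂ)
        * cexp (π * I * (τ / (p : ℂ) ^ 2) * ((x ⬝ᵥ S *ᵥ x : ℤ) : ℂ))
      = (p - 1) * heckeSq p k (thetaSeries S) τ
        + ((p : ℂ) ^ m / (p : ℂ) ^ 2 - p) * thetaSeries S τ := by
  classical
  have hpp : p.Prime := Fact.out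
  have hpz : (p : ℤ) ≠ 0 := by exact_mod_cast hpp.ne_zero
  have hpc : (p : ℂ) ≠ 0 := by exact_mod_cast hpp.ne_zero
  have hodd : Odd p := hpp.odd_of_ne_two hp
  have hτ' : 0 < (τ / (p : ℂ) ^ 2).im := by
    rw [show (p : ℂ) ^ 2 = ((p ^ 2 : ℝ) : ℂ) by push_cast; rfl, Complex.div_ofReal_im]
    have : (0 : ℝ) < p := by exact_mod_cast hpp.pos
    positivity
  have hinj : Function.Injective fun u : Fin m → ℤ ↦ (p : ℤ) • u := smul_right_injective _ hpz
  set e : ℂ → (Fin m → ℤ) → ℂ := fun τ x ↦ cexp (π * I * τ * ((x ⬝ᵥ S *ᵥ x : ℤ) : ℂ)) with he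
  have hesmul : ∀ (τ : ℂ) (u : Fin m → ℤ), e τ ((p : ℤ) • u) = e ((p : ℂ) ^ 2 * τ) u := by
    intro τ u
    simp only [he, Matrix.mulVec_smul, dotProduct_smul, smul_dotProduct, smul_eq_mul]
    congr 1
    push_cast
    ring
  have hone : ((p : ℂ) ^ 2)⁻¹ * ∑ b ∈ Finset.range (p ^ 2), thetaSeries S ((τ + b) / (p : ℂ) ^ 2)
      = ∑' x, if (p : ℤ) ^ 2 ∣ x ⬝ᵥ S *ᵥ x then e (τ / (p : ℂ) ^ 2) x else 0 := by
    have := sum_range_thetaSeries hS (hodd.pow (n := 2)) hτ'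
    push_cast at this
    simp_rw [add_div, this]
    rw [inv_mul_cancel_left₀ (pow_ne_zero 2 hpc)]
  have htwo := sum_range_thetaSeries hS hodd hτ
  have hthree : thetaSeries S ((p : ℂ) ^ 2 * τ) = ∑' x, if redVec p x = 0 then e τ x else 0 := by
    rw [← hinj.tsum_eq]
    · refine tsum_congr fun u ↦ ?_
      rw [if_pos (redVec_eq_zero_iff.mpr ⟨u, rfl⟩), hesmul]
    · intro x hx
      rw [Function.mem_support, ne_eq, ite_eq_right_iff, Classical.not_imp] at hx
      obtain ⟨u, rfl⟩ := redVec_eq_zero_iff.mp hx.1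
      exact ⟨u, rfl⟩
  have hsub : ∑' x, (neighborMult p S x : ℂ) * e (τ / (p : ℂ) ^ 2) x
      - (p - 1) * ∑' x, (if (p : ℤ) ^ 2 ∣ x ⬝ᵥ S *ᵥ x then e (τ / (p : ℂ) ^ 2) x else 0)
      = ∑' u : Fin m → ℤ, ((neighborMult p S ((p : ℤ) • u) : ℂ) - (p - 1)) * e τ u := by
    rw [← tsum_mul_left, ← Summable.tsum_sub (summable_neighborMult_mul hS.2.1 hτ')
      ((summable_ite_theta hS.2.1 hτ' _).mul_left _), ← hinj.tsum_eq]
    · refine tsum_congr fun u ↦ ?_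
      have hd : (p : ℤ) ^ 2 ∣ ((p : ℤ) • u) ⬝ᵥ S *ᵥ ((p : ℤ) • u) := by
        rw [Matrix.mulVec_smul, dotProduct_smul, smul_dotProduct, smul_eq_mul, smul_eq_mul]
        exact ⟨u ⬝ᵥ S *ᵥ u, by ring⟩
      rw [if_pos hd]
      change (neighborMult p S ((p : ℤ) • u) : ℂ) * e (τ / (p : ℂ) ^ 2) ((p : ℤ) • u)
        - (p - 1) * e (τ / (p : ℂ) ^ 2) ((p : ℤ) • u) = _
      rw [hesmul, mul_div_cancel₀ _ (pow_ne_zero 2 hpc)]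
      ring
    · intro x hx
      rw [Function.mem_support] at hx
      by_contra hcon
      apply hx
      have hx0 : redVec p x ≠ 0 := fun h ↦ hcon (by
        obtain ⟨u, rfl⟩ := redVec_eq_zero_iff.mp h
        exact ⟨u, rfl⟩)
      rw [neighborMult_of_ne hx0]
      split_ifs
      · rw [Nat.cast_sub hpp.one_le, Nat.cast_one, sub_self]
      · simp
  have hterm : ∀ u : Fin m → ℤ, ((neighborMult p S ((p : ℤ) • u) : ℂ) - (p - 1)) * e τ u
      = ((p : ℂ) ^ m / (p : ℂ) ^ 2 - p) * e τ u
        + (p : ℂ) ^ k / (p : ℂ) ^ 2 * (p * p - p) * (if (p : ℤ) ∣ u ⬝ᵥ S *ᵥ u then e τ u else 0)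
        + (p : ℂ) ^ m / (p : ℂ) ^ 2 * (p - 1) * (if redVec p u = 0 then e τ u else 0) := by
    intro u
    have h := neighborMult_smul hp hmk hk hS.1 hS.2.2.1 u
    have h' : (neighborMult p S ((p : ℤ) • u) : ℂ) =
        ((p : ℂ) ^ m * (if redVec p u = 0 then (p : ℂ) else 1)
          + (p : ℂ) ^ k * (if (p : ℤ) ∣ u ⬝ᵥ S *ᵥ u then (p : ℂ) * p - p else 0))
          / (p : ℂ) ^ 2 - 1 := by
      rw [← h]; field_simp; ring
    rw [h']
    split_ifs <;> field_simp <;> ring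
  have hsum := summable_theta hS.2.1 hτ
  have hpow : (p : ℂ) ^ m = ((p : ℂ) ^ k) ^ 2 := by rw [hmk, pow_mul']
  rw [sub_eq_iff_eq_add] at hsub
  change ∑' x, (neighborMult p S x : ℂ) * e (τ / (p : ℂ) ^ 2) x = _
  rw [hsub]
  simp_rw [hterm]
  rw [Summable.tsum_add ((hsum.mul_left _).add ((summable_ite_theta hS.2.1 hτ _).mul_left _))
    ((summable_ite_theta hS.2.1 hτ _).mul_left _), Summable.tsum_add (hsum.mul_left _)
    ((summable_ite_theta hS.2.1 hτ _).mul_left _), tsum_mul_left, tsum_mul_left, tsum_mul_left,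
    ← hthree, ← hone, heckeSq, htwo, hpow]
  change _ * thetaSeries S τ + _ + _ + _ = _
  ring

lemma sum_neighborTriples (hp : p ≠ 2) {R : Finset (Matrix (Fin m) (Fin m) ℤ)}
    (hR : ∀ S ∈ R, IsPosDefEvenUnimodular S)
    (huniq : ∀ S ∈ R, ∀ S' ∈ R, MatEquiv S S' → S = S')
    (hrep : ∀ T : Matrix (Fin m) (Fin m) ℤ, IsPosDefEvenUnimodular T → ∃ S ∈ R, MatEquiv S T)
    (hS : S ∈ R) {τ : ℂ} (hτ : 0 < τ.im) :
    ∑ S' ∈ R, (autCard S' : ℂ)⁻¹ * Nat.card (NeighborTriples p S S') * thetaSeries S' τ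
      = ∑' x : Fin m → ℤ, (neighborMult p S x : ℂ)
        * cexp (π * I * (τ / (p : ℂ) ^ 2) * ((x ⬝ᵥ S *ᵥ x : ℤ) : ℂ)) := by
  classical
  have hpp : p.Prime := Fact.out
  have hτ' : 0 < (τ / (p : ℂ) ^ 2).im := by
    rw [show (p : ℂ) ^ 2 = ((p ^ 2 : ℝ) : ℂ) by push_cast; rfl, Complex.div_ofReal_im]
    have : (0 : ℝ) < p := by exact_mod_cast hpp.pos
    positivity
  have hv : ∀ v : {v : Fin m → ZMod p // v ≠ 0},
      ∑ S' ∈ R, (autCard S' : ℂ)⁻¹ * Nat.card (NeighborMaps p S S' v) * thetaSeries S' τ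
      = ∑' x : Fin m → ℤ, if v.1 ⬝ᵥ redMat p S *ᵥ v.1 = 0 ∧ InNeighbor S v.1 x then
        cexp (π * I * (τ / (p : ℂ) ^ 2) * ((x ⬝ᵥ S *ᵥ x : ℤ) : ℂ)) else 0 := by
    rintro ⟨v, hv⟩
    by_cases hiso : v ⬝ᵥ redMat p S *ᵥ v = 0
    · obtain ⟨S₁, -, h1, h2⟩ := exists_neighbor_sum hp hR huniq hrep hS hv hiso
      rw [h1 fun S' ↦ thetaSeries S' τ, h2]
      simp only [hiso, true_and]
    · simp [hiso, neighborMaps_eq_empty hiso]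
  simp_rw [card_neighborTriples (hR S hS).2.1, Nat.cast_sum, Finset.mul_sum, Finset.sum_mul]
  rw [Finset.sum_comm]
  simp_rw [hv]
  rw [← Summable.tsum_finsetSum fun v _ ↦ summable_ite_theta (hR S hS).2.1 hτ' _]
  refine tsum_congr fun x ↦ ?_
  rw [← Finset.sum_filter, Finset.sum_const, nsmul_eq_mul]
  congr 2
  rw [neighborMult, ← Fintype.card_subtype, ← Fintype.card_subtype]
  exact Fintype.card_congr (Equiv.subtypeSubtypeEquivSubtypeInter _
    fun v : Fin m → ZMod p ↦ v ⬝ᵥ redMat p S *ᵥ v = 0 ∧ InNeighbor S v x)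

lemma sum_card_neighborTriples (hp : p ≠ 2) {k : ℕ} (hmk : m = 2 * k) (hk : Even k)
    {R : Finset (Matrix (Fin m) (Fin m) ℤ)}
    (hR : ∀ S ∈ R, IsPosDefEvenUnimodular S)
    (huniq : ∀ S ∈ R, ∀ S' ∈ R, MatEquiv S S' → S = S')
    (hrep : ∀ T : Matrix (Fin m) (Fin m) ℤ, IsPosDefEvenUnimodular T → ∃ S ∈ R, MatEquiv S T)
    (hS : S ∈ R) :
    ∑ S' ∈ R, (autCard S' : ℂ)⁻¹ * Nat.card (NeighborTriples p S S')
      = ((p : ℂ) ^ m * p + (p : ℂ) ^ k * (p * p - p)) / (p : ℂ) ^ 2 - 1 := by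
  classical
  have hpc : (p : ℂ) ≠ 0 := by exact_mod_cast (Fact.out : p.Prime).ne_zero
  have hred : redVec p (0 : Fin m → ℤ) = 0 := redVec_eq_zero_iff.mpr ⟨0, by simp⟩
  have hv : ∀ v : {v : Fin m → ZMod p // v ≠ 0},
      ∑ S' ∈ R, (autCard S' : ℂ)⁻¹ * Nat.card (NeighborMaps p S S' v)
      = if v.1 ⬝ᵥ redMat p S *ᵥ v.1 = 0 ∧ InNeighbor S v.1 ((p : ℤ) • 0) then 1 else 0 := by
    rintro ⟨v, hv⟩
    by_cases hiso : v ⬝ᵥ redMat p S *ᵥ v = 0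
    · obtain ⟨S₁, -, h1, h2⟩ := exists_neighbor_sum hp hR huniq hrep hS hv hiso
      have := h1 fun _ ↦ 1
      simp only [mul_one] at this
      rw [this, if_pos ⟨hiso, Or.inr ⟨0, rfl, by
        rw [hred, Matrix.mulVec_zero, dotProduct_zero]⟩⟩]
    · simp [hiso, neighborMaps_eq_empty hiso]
  simp_rw [card_neighborTriples (hR S hS).2.1, Nat.cast_sum, Finset.mul_sum]
  rw [Finset.sum_comm]
  simp_rw [hv]
  have h := neighborMult_smul hp hmk hk (hR S hS).1 (hR S hS).2.2.1 0
  rw [if_pos hred, if_pos (by simp)] at h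
  rw [← h, mul_div_cancel_left₀ _ (pow_ne_zero 2 hpc), add_sub_cancel_right,
    ← Finset.sum_filter, Finset.sum_const, nsmul_eq_mul, mul_one]
  congr 1
  rw [neighborMult, ← Fintype.card_subtype, ← Fintype.card_subtype]
  exact Fintype.card_congr (Equiv.subtypeSubtypeEquivSubtypeInter _
    fun v : Fin m → ZMod p ↦ v ⬝ᵥ redMat p S *ᵥ v = 0 ∧ InNeighbor S v ((p : ℤ) • 0))

/-- The weighted average of theta series over the genus is a Hecke eigenform. -/
theorem heckeSq_sum_thetaSeries (hp : p ≠ 2) {k : ℕ} (hmk : m = 2 * k) (hk : Even k)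
    {R : Finset (Matrix (Fin m) (Fin m) ℤ)}
    (hR : ∀ S ∈ R, IsPosDefEvenUnimodular S)
    (huniq : ∀ S ∈ R, ∀ S' ∈ R, MatEquiv S S' → S = S')
    (hrep : ∀ T : Matrix (Fin m) (Fin m) ℤ, IsPosDefEvenUnimodular T → ∃ S ∈ R, MatEquiv S T)
    {τ : ℂ} (hτ : 0 < τ.im) :
    heckeSq p k (fun z ↦ ∑ S ∈ R, (autCard S : ℂ)⁻¹ * thetaSeries S z) τ
      = (((p : ℂ) ^ k) ^ 2 / (p : ℂ) ^ 2 + (p : ℂ) ^ k / p + 1)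
        * ∑ S ∈ R, (autCard S : ℂ)⁻¹ * thetaSeries S τ := by
  have hpp : p.Prime := Fact.out
  have hpc : (p : ℂ) ≠ 0 := by exact_mod_cast hpp.ne_zero
  have hp1 : (p : ℂ) - 1 ≠ 0 := sub_ne_zero.mpr (by exact_mod_cast hpp.ne_one)
  have hlin : heckeSq p k (fun z ↦ ∑ S ∈ R, (autCard S : ℂ)⁻¹ * thetaSeries S z) τ
      = ∑ S ∈ R, (autCard S : ℂ)⁻¹ * heckeSq p k (thetaSeries S) τ := by
    unfold heckeSq
    simp_rw [mul_add, Finset.sum_add_distrib, Finset.mul_sum]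
    congr 1
    congr 1
    · rw [Finset.sum_comm]
      exact Finset.sum_congr rfl fun _ _ ↦ Finset.sum_congr rfl fun _ _ ↦ by ring
    · rw [Finset.sum_comm]
      exact Finset.sum_congr rfl fun _ _ ↦ Finset.sum_congr rfl fun _ _ ↦ by ring
    · exact Finset.sum_congr rfl fun _ _ ↦ by ring
  have hdouble : ∑ S ∈ R, (autCard S : ℂ)⁻¹ * ∑ S' ∈ R,
        (autCard S' : ℂ)⁻¹ * Nat.card (NeighborTriples p S S') * thetaSeries S' τ
      = (((p : ℂ) ^ m * p + (p : ℂ) ^ k * (p * p - p)) / (p : ℂ) ^ 2 - 1)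
        * ∑ S ∈ R, (autCard S : ℂ)⁻¹ * thetaSeries S τ := by
    simp_rw [Finset.mul_sum]
    rw [Finset.sum_comm]
    refine Finset.sum_congr rfl fun S' hS' ↦ ?_
    rw [← sum_card_neighborTriples hp hmk hk hR huniq hrep hS', Finset.sum_mul]
    refine Finset.sum_congr rfl fun S hS ↦ ?_
    rw [card_neighborTriples_comm (hR S hS) (hR S' hS')]
    ring
  have hsum : ∑ S ∈ R, (autCard S : ℂ)⁻¹ * ∑ S' ∈ R,
        (autCard S' : ℂ)⁻¹ * Nat.card (NeighborTriples p S S') * thetaSeries S' τ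
      = (p - 1) * ∑ S ∈ R, (autCard S : ℂ)⁻¹ * heckeSq p k (thetaSeries S) τ
        + ((p : ℂ) ^ m / (p : ℂ) ^ 2 - p) * ∑ S ∈ R, (autCard S : ℂ)⁻¹ * thetaSeries S τ := by
    rw [Finset.mul_sum, Finset.mul_sum, ← Finset.sum_add_distrib]
    refine Finset.sum_congr rfl fun S hS ↦ ?_
    rw [sum_neighborTriples hp hR huniq hrep hS hτ, tsum_neighborMult hp hmk hk (hR S hS) hτ]
    ring
  have hpow : (p : ℂ) ^ m = ((p : ℂ) ^ k) ^ 2 := by rw [hmk, pow_mul']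
  rw [hdouble, hpow] at hsum
  rw [hlin]
  apply mul_left_cancel₀ hp1
  have h2 := eq_sub_of_add_eq hsum.symm
  rw [h2]
  field_simp
  ring

end HeckeOperator

section PoissonSummation

variable {ι : Type*}

lemma iUnion_pi_Ioc_intCast :
    ⋃ l : ι → ℤ, {x : ι → ℝ | ∀ i, x i ∈ Ioc (l i : ℝ) (l i + 1)} = univ := by
  refine eq_univ_of_forall fun x ↦ mem_iUnion.mpr ⟨fun i ↦ ⌈x i⌉ - 1, fun i ↦ ?_⟩
  have h1 := Int.ceil_lt_add_one (x i)
  have h2 := Int.le_ceil (x i)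
  constructor <;> push_cast <;> linarith

lemma pairwise_disjoint_pi_Ioc_intCast :
    Pairwise (Function.onFun Disjoint
      fun l : ι → ℤ ↦ {x : ι → ℝ | ∀ i, x i ∈ Ioc (l i : ℝ) (l i + 1)}) := by
  intro l l' hne
  refine Set.disjoint_left.mpr fun x hx hx' ↦ hne (funext fun i ↦ ?_)
  obtain ⟨h1, h2⟩ := hx i
  obtain ⟨h3, h4⟩ := hx' i
  have h5 : (l i : ℝ) < l' i + 1 := by linarith
  have h6 : (l' i : ℝ) < l i + 1 := by linarith
  norm_cast at h5 h6
  omega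

variable [Fintype ι]

/-- The translates of a function along the integer lattice are dominated, uniformly on bounded
sets, by a summable family. -/
def LatticeDominated (f : (ι → ℝ) → ℂ) : Prop :=
  ∀ B : ℝ, ∃ u : (ι → ℤ) → ℝ, Summable u ∧
    ∀ x : ι → ℝ, ‖x‖ ≤ B → ∀ l : ι → ℤ, ‖f (x + fun i ↦ (l i : ℝ))‖ ≤ u l

lemma LatticeDominated.continuous_tsum {f : (ι → ℝ) → ℂ} (hf : Continuous f)
    (hd : LatticeDominated f) :
    Continuous fun x ↦ ∑' l : ι → ℤ, f (x + fun i ↦ (l i : ℝ)) := by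
  rw [continuous_iff_continuousAt]
  intro x
  obtain ⟨u, hu, hb⟩ := hd (‖x‖ + 1)
  refine ContinuousOn.continuousAt (s := Metric.closedBall x 1) ?_
    (Metric.closedBall_mem_nhds x one_pos)
  refine continuousOn_tsum (fun l ↦ (hf.comp (by fun_prop)).continuousOn) hu fun l y hy ↦ hb y ?_ l
  have h1 := norm_le_norm_add_norm_sub' y x
  rw [mem_closedBall_iff_norm] at hy
  linarith

lemma measurableSet_pi_Ioc (a : ι → ℝ) :
    MeasurableSet {x : ι → ℝ | ∀ i, x i ∈ Ioc (a i) (a i + 1)} :=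
  MeasurableSet.univ_pi' fun _ ↦ measurableSet_Ioc

lemma volume_pi_Ioc (a : ι → ℝ) :
    MeasureTheory.volume {x : ι → ℝ | ∀ i, x i ∈ Ioc (a i) (a i + 1)} = 1 := by
  have : {x : ι → ℝ | ∀ i, x i ∈ Ioc (a i) (a i + 1)} = univ.pi fun i ↦ Ioc (a i) (a i + 1) := by
    ext x; simp
  rw [this, MeasureTheory.volume_pi_pi]
  simp

/-- Unfolding an integral over the unit cube. -/
lemma LatticeDominated.setIntegral_tsum {g : (ι → ℝ) → ℂ} (hg : Continuous g)
    (hd : LatticeDominated g) :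
    ∫ x in {x : ι → ℝ | ∀ i, x i ∈ Ioc (0 : ℝ) (0 + 1)}, ∑' l : ι → ℤ, g (x + fun i ↦ (l i : ℝ))
      = ∫ x, g x := by
  have hBm := measurableSet_pi_Ioc fun _ : ι ↦ (0 : ℝ)
  have hBv := volume_pi_Ioc fun _ : ι ↦ (0 : ℝ)
  have hmem : ∀ x : ι → ℝ, x ∈ {x : ι → ℝ | ∀ i, x i ∈ Ioc (0 : ℝ) (0 + 1)} ↔
      ∀ i, x i ∈ Ioc (0 : ℝ) (0 + 1) := fun _ ↦ Iff.rfl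
  generalize {x : ι → ℝ | ∀ i, x i ∈ Ioc (0 : ℝ) (0 + 1)} = B at hBm hBv hmem ⊢
  have hBn : ∀ x ∈ B, ‖x‖ ≤ 1 := by
    intro x hx
    refine (pi_norm_le_iff_of_nonneg zero_le_one).mpr fun i ↦ ?_
    obtain ⟨h1, h2⟩ := (hmem x).mp hx i
    rw [Real.norm_eq_abs, abs_le]
    constructor <;> linarith
  obtain ⟨u, hu, hb⟩ := hd 1
  have hgInt : ∀ l : ι → ℤ, MeasureTheory.IntegrableOn (fun x ↦ g (x + fun i ↦ (l i : ℝ))) B := by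
    intro l
    refine MeasureTheory.IntegrableOn.of_bound (by simp [hBv])
      (hg.comp (by fun_prop)).aestronglyMeasurable (u l) ?_
    filter_upwards [MeasureTheory.ae_restrict_mem hBm] with x hx using hb x (hBn x hx) l
  have hsum : Summable fun l : ι → ℤ ↦ ∫ x in B, ‖g (x + fun i ↦ (l i : ℝ))‖ := by
    refine Summable.of_nonneg_of_le
      (fun l ↦ MeasureTheory.integral_nonneg fun x ↦ norm_nonneg _) (fun l ↦ ?_) hu
    calc ∫ x in B, ‖g (x + fun i ↦ (l i : ℝ))‖ ≤ ∫ x in B, u l :=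
          MeasureTheory.setIntegral_mono_on (hgInt l).norm (by simp [hBv]) hBm
            fun x hx ↦ hb x (hBn x hx) l
      _ = u l := by simp [MeasureTheory.measureReal_def, hBv]
  have hpre : ∀ l : ι → ℤ, (fun x : ι → ℝ ↦ x + fun i ↦ (l i : ℝ)) ⁻¹'
      {x | ∀ i, x i ∈ Ioc (l i : ℝ) (l i + 1)} = B := by
    intro l
    ext x
    rw [hmem]
    refine forall_congr' fun i ↦ ?_
    simp only [Pi.add_apply, mem_Ioc]
    constructor <;> rintro ⟨h1, h2⟩ <;> constructor <;> linarith
  have hmp : ∀ l : ι → ℤ, MeasureTheory.MeasurePreserving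
      (fun x : ι → ℝ ↦ x + fun i ↦ (l i : ℝ)) :=
    fun l ↦ MeasureTheory.measurePreserving_add_right _ _
  have hme : ∀ l : ι → ℤ, MeasurableEmbedding (fun x : ι → ℝ ↦ x + fun i ↦ (l i : ℝ)) :=
    fun l ↦ measurableEmbedding_addRight _
  have htr : ∀ l : ι → ℤ, ∫ x in {x | ∀ i, x i ∈ Ioc (l i : ℝ) (l i + 1)}, g x
      = ∫ x in B, g (x + fun i ↦ (l i : ℝ)) := by
    intro l
    rw [← (hmp l).setIntegral_preimage_emb (hme l) g, hpre]
  have htrn : ∀ l : ι → ℤ, ∫ x in {x | ∀ i, x i ∈ Ioc (l i : ℝ) (l i + 1)}, ‖g x‖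
      = ∫ x in B, ‖g (x + fun i ↦ (l i : ℝ))‖ := by
    intro l
    rw [← (hmp l).setIntegral_preimage_emb (hme l) fun x ↦ ‖g x‖, hpre]
  have hon : MeasureTheory.IntegrableOn g
      (⋃ l : ι → ℤ, {x : ι → ℝ | ∀ i, x i ∈ Ioc (l i : ℝ) (l i + 1)}) := by
    refine MeasureTheory.integrableOn_iUnion_of_summable_integral_norm (fun l ↦ ?_) ?_
    · rw [← (hmp l).integrableOn_comp_preimage (hme l), hpre]
      exact hgInt l
    · simpa only [htrn] using hsum
  have hm : ∀ l : ι → ℤ, MeasurableSet {x : ι → ℝ | ∀ i, x i ∈ Ioc (l i : ℝ) (l i + 1)} :=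
    fun l ↦ measurableSet_pi_Ioc fun i ↦ (l i : ℝ)
  have hunion := MeasureTheory.integral_iUnion hm pairwise_disjoint_pi_Ioc_intCast hon
  rw [iUnion_pi_Ioc_intCast, MeasureTheory.setIntegral_univ] at hunion
  exact (MeasureTheory.integral_tsum_of_summable_integral_norm hgInt hsum).symm.trans
    ((tsum_congr htr).symm.trans hunion.symm)

lemma mFourier_coe (n : ι → ℤ) (x : ι → ℝ) :
    UnitAddTorus.mFourier n (fun i ↦ (x i : UnitAddCircle))
      = cexp (2 * π * I * ∑ i, (n i : ℂ) * x i) := by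
  simp only [UnitAddTorus.mFourier, ContinuousMap.coe_mk, fourier_coe_apply]
  rw [← Complex.exp_sum, Finset.mul_sum]
  congr 1
  refine Finset.sum_congr rfl fun i _ ↦ ?_
  push_cast
  ring

/-- The Poisson summation formula for the lattice `ℤ^ι`. -/
theorem LatticeDominated.tsum_eq_tsum_integral {f : (ι → ℝ) → ℂ} (hf : Continuous f)
    (hd : LatticeDominated f)
    (hs : Summable fun n : ι → ℤ ↦ ∫ x : ι → ℝ, cexp (-2 * π * I * ∑ i, (n i : ℂ) * x i) * f x) :
    ∑' l : ι → ℤ, f (fun i ↦ (l i : ℝ))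
      = ∑' n : ι → ℤ, ∫ x : ι → ℝ, cexp (-2 * π * I * ∑ i, (n i : ℂ) * x i) * f x := by
  set Φ : (ι → ℝ) → ℂ := fun x ↦ ∑' l : ι → ℤ, f (x + fun i ↦ (l i : ℝ)) with hΦ
  have hΦc : Continuous Φ := hd.continuous_tsum hf
  have hΦp : ∀ (x : ι → ℝ) (l : ι → ℤ), Φ (x + fun i ↦ (l i : ℝ)) = Φ x := by
    intro x l
    rw [hΦ]
    dsimp only
    rw [← (Equiv.addLeft l).tsum_eq fun l' : ι → ℤ ↦ f (x + fun i ↦ (l' i : ℝ))]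
    refine tsum_congr fun l' ↦ congrArg f (funext fun i ↦ ?_)
    simp only [Pi.add_apply, Equiv.coe_addLeft, Int.cast_add]
    ring
  set q : (ι → ℝ) → UnitAddTorus ι := fun x i ↦ (x i : UnitAddCircle) with hq
  have hqo : IsOpenQuotientMap q :=
    IsOpenQuotientMap.piMap fun _ ↦ QuotientAddGroup.isOpenQuotientMap_mk
  set F : UnitAddTorus ι → ℂ := fun t ↦ Φ (Function.surjInv hqo.surjective t) with hF
  have hFq : ∀ x, F (q x) = Φ x := by
    intro x
    have h := Function.surjInv_eq hqo.surjective (q x)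
    have h' : ∀ i, ∃ n : ℤ, Function.surjInv hqo.surjective (q x) i = x i + n := by
      intro i
      have hi : ((Function.surjInv hqo.surjective (q x) i : ℝ) : UnitAddCircle) = x i :=
        congrFun h i
      obtain ⟨n, hn⟩ := AddSubgroup.mem_zmultiples_iff.mp (QuotientAddGroup.eq_iff_sub_mem.mp hi)
      exact ⟨n, by simp only [zsmul_eq_mul, mul_one] at hn; linarith⟩
    choose n hn using h'
    rw [hF]
    dsimp only
    rw [← hΦp x n]
    exact congrArg Φ (funext hn)
  have hFc : Continuous F := by
    rw [← hqo.continuous_comp_iff]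
    exact hΦc.congr fun x ↦ (hFq x).symm
  have hexp : ∀ (n l : ι → ℤ) (x : ι → ℝ),
      cexp (-2 * π * I * ∑ i, (n i : ℂ) * ((x + fun i ↦ (l i : ℝ)) i : ℝ))
        = cexp (-2 * π * I * ∑ i, (n i : ℂ) * x i) := by
    intro n l x
    rw [Complex.exp_eq_exp_iff_exists_int]
    refine ⟨-∑ i, n i * l i, ?_⟩
    simp only [Pi.add_apply]
    push_cast
    simp_rw [mul_add, Finset.sum_add_distrib]
    ring
  have hnorm : ∀ (n : ι → ℤ) (x : ι → ℝ), ‖cexp (-2 * π * I * ∑ i, (n i : ℂ) * x i)‖ = 1 := by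
    intro n x
    rw [show (-2 * π * I * ∑ i, (n i : ℂ) * x i : ℂ)
      = ((-2 * π * ∑ i, (n i : ℝ) * x i : ℝ) : ℂ) * I by push_cast; ring]
    exact Complex.norm_exp_ofReal_mul_I _
  have hcoeff : ∀ n : ι → ℤ, UnitAddTorus.mFourierCoeff F n
      = ∫ x : ι → ℝ, cexp (-2 * π * I * ∑ i, (n i : ℂ) * x i) * f x := by
    intro n
    rw [UnitAddTorus.mFourierCoeff_eq_integral F n fun _ ↦ 0]
    have hg : Continuous fun x : ι → ℝ ↦ cexp (-2 * π * I * ∑ i, (n i : ℂ) * x i) * f x := by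
      fun_prop
    have hgd : LatticeDominated
        fun x : ι → ℝ ↦ cexp (-2 * π * I * ∑ i, (n i : ℂ) * x i) * f x := by
      intro B
      obtain ⟨u, hu, hb⟩ := hd B
      refine ⟨u, hu, fun x hx l ↦ ?_⟩
      rw [norm_mul, hnorm, one_mul]
      exact hb x hx l
    rw [← hgd.setIntegral_tsum hg]
    refine MeasureTheory.setIntegral_congr_fun (measurableSet_pi_Ioc fun _ ↦ (0 : ℝ)) fun x _ ↦ ?_
    simp only [hexp, tsum_mul_left]
    rw [mFourier_coe, smul_eq_mul]
    congr 1
    · congr 1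
      simp
    · exact hFq x
  have hsum : Summable (UnitAddTorus.mFourierCoeff F) := by
    rw [funext hcoeff]
    exact hs
  have := UnitAddTorus.hasSum_mFourier_series_apply_of_summable (f := ⟨F, hFc⟩) hsum (q 0)
  have hΦ0 : F (q 0) = ∑' l : ι → ℤ, f (fun i ↦ (l i : ℝ)) := by
    rw [hFq, hΦ]
    simp
  rw [← hΦ0]
  refine this.tsum_eq.symm.trans (tsum_congr fun n ↦ ?_)
  rw [ContinuousMap.coe_mk, hcoeff, hq, mFourier_coe]
  simp

end PoissonSummation

section ThetaInversion

open scoped MatrixOrder Matrix.Norms.L2Operator in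
lemma Matrix.PosDef.exists_transpose_mul_self {n : Type*} [Fintype n] [DecidableEq n]
    {A : Matrix n n ℝ} (hA : A.PosDef) : ∃ B : Matrix n n ℝ, A = Bᵀ * B := by
  obtain ⟨B, hB⟩ := CStarAlgebra.nonneg_iff_eq_star_mul_self.mp hA.posSemidef.nonneg
  exact ⟨B, by rw [hB, Matrix.star_eq_conjTranspose, Matrix.conjTranspose_eq_transpose_of_trivial]⟩

variable {m : ℕ} {S : Matrix (Fin m) (Fin m) ℤ} {τ : ℂ}

lemma latticeDominated_gaussian {A : Matrix (Fin m) (Fin m) ℝ} (hA : A.PosDef) (hτ : 0 < τ.im) :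
    LatticeDominated fun x : Fin m → ℝ ↦ cexp (π * I * τ * ((x ⬝ᵥ A *ᵥ x : ℝ) : ℂ)) := by
  obtain ⟨c, hc, h⟩ := hA.exists_pos_mul_sum_sq_le
  intro B
  have ha : 0 < π * τ.im * c := by positivity
  refine ⟨fun l ↦ rexp (π * τ.im * c * (m * B ^ 2))
    * rexp (-(π * τ.im * c / 2) * ∑ i, (l i : ℝ) ^ 2),
    (summable_exp_neg_mul_sum_sq m (half_pos ha)).mul_left _, fun x hx l ↦ ?_⟩
  beta_reduce
  rw [Complex.norm_exp, ← Real.exp_add, Real.exp_le_exp]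
  set y : Fin m → ℝ := x + fun i ↦ (l i : ℝ) with hy
  have hre : (π * I * τ * ((y ⬝ᵥ A *ᵥ y : ℝ) : ℂ)).re = -(π * τ.im * (y ⬝ᵥ A *ᵥ y)) := by
    simp [mul_assoc]
  rw [hre]
  have hsum : (∑ i, (l i : ℝ) ^ 2) / 2 - m * B ^ 2 ≤ ∑ i, y i ^ 2 := by
    have hcard : (m : ℝ) * B ^ 2 = ∑ _i : Fin m, B ^ 2 := by simp
    rw [hcard, Finset.sum_div, ← Finset.sum_sub_distrib]
    refine Finset.sum_le_sum fun i _ ↦ ?_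
    have hxi : x i ^ 2 ≤ B ^ 2 := by
      refine sq_le_sq' ?_ ?_ <;>
      linarith [abs_le.mp ((norm_le_pi_norm x i).trans hx)]
    simp only [hy, Pi.add_apply]
    nlinarith [sq_nonneg (2 * x i + l i)]
  have h1 := mul_le_mul_of_nonneg_left hsum ha.le
  have h2 := mul_le_mul_of_nonneg_left (h y) (by positivity : 0 ≤ π * τ.im)
  linarith

lemma integral_comp_mulVec {B : Matrix (Fin m) (Fin m) ℝ} (hB : |B.det| = 1)
    {h : (Fin m → ℝ) → ℂ} (hh : Continuous h) : ∫ x, h (B *ᵥ x) = ∫ x, h x := by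
  have hdet : B.det ≠ 0 := fun h0 ↦ by simp [h0] at hB
  have hmap := Real.map_matrix_volume_pi_eq_smul_volume_pi hdet
  rw [abs_inv, hB, inv_one, ENNReal.ofReal_one, one_smul] at hmap
  have hc : Continuous (Matrix.toLin' B) := (Matrix.toLin' B).continuous_of_finiteDimensional
  conv_rhs => rw [← hmap, MeasureTheory.integral_map hc.aemeasurable hh.aestronglyMeasurable]
  rfl

lemma integral_gaussian_quadForm {B : Matrix (Fin m) (Fin m) ℝ} (hB : |B.det| = 1)
    (hτ : 0 < τ.im) (w : Fin m → ℝ) :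
    ∫ x : Fin m → ℝ, cexp (-2 * π * I * ((w ⬝ᵥ (Bᵀ * B) *ᵥ x : ℝ) : ℂ))
        * cexp (π * I * τ * ((x ⬝ᵥ (Bᵀ * B) *ᵥ x : ℝ) : ℂ))
      = (I / τ) ^ ((m : ℂ) / 2) * cexp (π * I * (-1 / τ) * ((w ⬝ᵥ (Bᵀ * B) *ᵥ w : ℝ) : ℂ)) := by
  have hτ0 : τ ≠ 0 := fun h ↦ by simp [h] at hτ
  have hπ : (π : ℂ) ≠ 0 := by exact_mod_cast Real.pi_ne_zero
  have hform : ∀ x y : Fin m → ℝ, x ⬝ᵥ (Bᵀ * B) *ᵥ y = ∑ i, (B *ᵥ x) i * (B *ᵥ y) i := by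
    intro x y
    rw [← Matrix.mulVec_mulVec, Matrix.dotProduct_mulVec, Matrix.vecMul_transpose]
    rfl
  simp_rw [hform]
  have hb : 0 < (-(π * I * τ)).re := by
    simp [mul_assoc]
    positivity
  have key := GaussianFourier.integral_cexp_neg_mul_sum_add hb
    fun i ↦ -2 * π * I * ((B *ᵥ w) i : ℂ)
  rw [Fintype.card_fin] at key
  have hcont : Continuous fun v : Fin m → ℝ ↦ cexp (-(-(π * I * τ)) * ∑ i, (v i : ℂ) ^ 2
      + ∑ i, -2 * π * I * ((B *ᵥ w) i : ℂ) * v i) := by fun_prop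
  have hlhs : ∫ x : Fin m → ℝ,
      cexp (-2 * π * I * ((∑ i, (B *ᵥ w) i * (B *ᵥ x) i : ℝ) : ℂ))
        * cexp (π * I * τ * ((∑ i, (B *ᵥ x) i * (B *ᵥ x) i : ℝ) : ℂ))
      = ∫ v : Fin m → ℝ, cexp (-(-(π * I * τ)) * ∑ i, (v i : ℂ) ^ 2
      + ∑ i, -2 * π * I * ((B *ᵥ w) i : ℂ) * v i) := by
    rw [← integral_comp_mulVec hB hcont]
    congr 1
    ext x
    rw [← Complex.exp_add]
    congr 1
    push_cast
    simp_rw [neg_neg, mul_assoc, Finset.mul_sum, ← Finset.sum_add_distrib]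
    refine Finset.sum_congr rfl fun i _ ↦ ?_
    ring
  rw [hlhs, key]
  congr 1
  · congr 1
    field_simp
    rw [Complex.I_sq]
  · congr 1
    push_cast
    rw [Finset.sum_div, Finset.mul_sum]
    refine Finset.sum_congr rfl fun i _ ↦ ?_
    field_simp
    ring_nf

theorem thetaSeries_neg_one_div (hS : IsPosDefEvenUnimodular S) {k : ℕ} (hmk : m = 2 * k)
    (hk : 4 ∣ k) (hτ : 0 < τ.im) : thetaSeries S (-1 / τ) = τ ^ k * thetaSeries S τ := by
  have hτ0 : τ ≠ 0 := fun h ↦ by simp [h] at hτ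
  obtain ⟨hsym, hpos, hdet, -⟩ := hS
  obtain ⟨B, hB⟩ := hpos.exists_transpose_mul_self
  have hBdet : |B.det| = 1 := by
    have h1 : (S.map ((↑) : ℤ → ℝ)).det = 1 := by
      have := (Int.castRingHom ℝ).map_det S
      rw [hdet, map_one] at this
      exact this.symm
    rw [hB, Matrix.det_mul, Matrix.det_transpose, ← sq] at h1
    exact (abs_eq zero_le_one).mpr (by simpa using h1)
  have hconst : (I / τ) ^ ((m : ℂ) / 2) = (τ ^ k)⁻¹ := by
    rw [hmk]
    push_cast
    rw [mul_div_cancel_left₀ _ two_ne_zero, Complex.cpow_natCast, div_pow]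
    obtain ⟨j, rfl⟩ := hk
    rw [pow_mul I, Complex.I_pow_four, one_pow, one_div]
  have him : 0 < (-1 / τ).im := by
    rw [neg_div, one_div, Complex.neg_im, Complex.inv_im, neg_div, neg_neg]
    exact div_pos hτ (Complex.normSq_pos.mpr hτ0)
  have hSu : IsUnit S.det := by rw [hdet]; exact isUnit_one
  let e : (Fin m → ℤ) ≃ (Fin m → ℤ) :=
    { toFun := fun x ↦ S *ᵥ x
      invFun := fun x ↦ S⁻¹ *ᵥ x
      left_inv := fun x ↦ by
        simp only [Matrix.mulVec_mulVec, Matrix.nonsing_inv_mul _ hSu, Matrix.one_mulVec]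
      right_inv := fun x ↦ by
        simp only [Matrix.mulVec_mulVec, Matrix.mul_nonsing_inv _ hSu, Matrix.one_mulVec] }
  set f : (Fin m → ℝ) → ℂ :=
    fun x ↦ cexp (π * I * τ * ((x ⬝ᵥ S.map ((↑) : ℤ → ℝ) *ᵥ x : ℝ) : ℂ)) with hf
  have hlin : ∀ (x : Fin m → ℤ) (y : Fin m → ℝ), ∑ i, ((e x i : ℤ) : ℂ) * y i
      = (((fun i ↦ (x i : ℝ)) ⬝ᵥ S.map ((↑) : ℤ → ℝ) *ᵥ y : ℝ) : ℂ) := by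
    intro x y
    rw [Matrix.dotProduct_mulVec, ← Matrix.mulVec_transpose, ← Matrix.transpose_map, hsym]
    simp [e, dotProduct, Matrix.mulVec]
  have hcoeff : ∀ x : Fin m → ℤ,
      ∫ y : Fin m → ℝ, cexp (-2 * π * I * ∑ i, ((e x i : ℤ) : ℂ) * y i) * f y
        = (τ ^ k)⁻¹ * cexp (π * I * (-1 / τ) * ((x ⬝ᵥ S *ᵥ x : ℤ) : ℂ)) := by
    intro x
    simp_rw [hlin, hf]
    rw [hB, integral_gaussian_quadForm hBdet hτ, ← hB, dotProduct_map_cast, hconst,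
      Complex.ofReal_intCast]
  have hsummable : Summable fun n : Fin m → ℤ ↦
      ∫ y : Fin m → ℝ, cexp (-2 * π * I * ∑ i, ((n i : ℤ) : ℂ) * y i) * f y := by
    rw [← e.summable_iff]
    refine ((summable_theta hpos him).mul_left (τ ^ k)⁻¹).congr fun x ↦ (hcoeff x).symm
  have hP := (latticeDominated_gaussian hpos hτ).tsum_eq_tsum_integral (by fun_prop) hsummable
  have hP' := hP.trans ((e.tsum_eq _).symm.trans (tsum_congr hcoeff))
  rw [tsum_mul_left] at hP'
  have hl : ∑' l : Fin m → ℤ, f (fun i ↦ (l i : ℝ)) = thetaSeries S τ := by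
    refine tsum_congr fun l ↦ ?_
    simp only [hf, dotProduct_map_cast, Complex.ofReal_intCast]
  have hr : thetaSeries S τ = (τ ^ k)⁻¹ * thetaSeries S (-1 / τ) := hl.symm.trans hP'
  rw [hr, mul_inv_cancel_left₀ (pow_ne_zero k hτ0)]

lemma thetaSeries_add_one (hS : IsPosDefEvenUnimodular S) (τ : ℂ) :
    thetaSeries S (τ + 1) = thetaSeries S τ := by
  refine tsum_congr fun x ↦ ?_
  rw [Complex.exp_eq_exp_iff_exists_int]
  obtain ⟨r, hr⟩ := (even_quadForm hS.1 hS.2.2.2 x).two_dvd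
  refine ⟨r, ?_⟩
  rw [hr]
  push_cast
  ring

lemma differentiableOn_thetaSeries (hS : (S.map ((↑) : ℤ → ℝ)).PosDef) :
    DifferentiableOn ℂ (thetaSeries S) {τ | 0 < τ.im} := by
  have hopen : IsOpen {τ : ℂ | 0 < τ.im} := isOpen_lt continuous_const Complex.continuous_im
  intro τ hτ
  have hτ' : 0 < τ.im := hτ
  have hopen' : IsOpen {z : ℂ | τ.im / 2 < z.im} := isOpen_lt continuous_const Complex.continuous_im
  have h := Complex.differentiableOn_tsum_of_summable_norm (u := fun x : Fin m → ℤ ↦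
      rexp (-(π * (τ.im / 2)) * ((x ⬝ᵥ S *ᵥ x : ℤ) : ℝ)))
    (F := fun (x : Fin m → ℤ) (z : ℂ) ↦ cexp (π * I * z * ((x ⬝ᵥ S *ᵥ x : ℤ) : ℂ)))
    (summable_exp_neg_quadForm hS (by positivity)) (fun x ↦ by fun_prop) hopen' fun x z hz ↦ by
      rw [norm_theta_term, Real.exp_le_exp]
      have hq : (0 : ℝ) ≤ ((x ⬝ᵥ S *ᵥ x : ℤ) : ℝ) := by exact_mod_cast quadForm_nonneg hS x
      have hz' : τ.im / 2 ≤ z.im := le_of_lt hz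
      have := mul_le_mul_of_nonneg_right (mul_le_mul_of_nonneg_left hz' Real.pi_pos.le) hq
      linarith
  exact (h.differentiableAt (hopen'.mem_nhds (half_lt_self hτ'))).differentiableWithinAt

lemma tendsto_thetaSeries (hS : (S.map ((↑) : ℤ → ℝ)).PosDef) :
    Filter.Tendsto (thetaSeries S) (Filter.comap Complex.im Filter.atTop) (nhds 1) := by
  have hval : (1 : ℂ) = ∑' x : Fin m → ℤ, if x = 0 then 1 else 0 := by
    rw [tsum_ite_eq]
  rw [hval]
  refine tendsto_tsum_of_dominated_convergence
    (summable_exp_neg_quadForm hS Real.pi_pos) (fun x ↦ ?_) ?_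
  · split_ifs with hx
    · simpa [hx] using tendsto_const_nhds
    · have hq : 0 < x ⬝ᵥ S *ᵥ x := by
        obtain ⟨c, hc, h⟩ := exists_pos_mul_sum_sq_le_quadForm hS
        have hne : ∃ i, x i ≠ 0 := Function.ne_iff.mp hx
        obtain ⟨i, hi⟩ := hne
        have hs : 0 < ∑ i, (x i : ℝ) ^ 2 :=
          Finset.sum_pos' (fun _ _ ↦ sq_nonneg _) ⟨i, Finset.mem_univ _, by positivity⟩
        have : (0 : ℝ) < ((x ⬝ᵥ S *ᵥ x : ℤ) : ℝ) := (mul_pos hc hs).trans_le (h x)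
        exact_mod_cast this
      rw [tendsto_zero_iff_norm_tendsto_zero]
      simp_rw [norm_theta_term]
      refine Real.tendsto_exp_atBot.comp ?_
      have hq' : (0 : ℝ) < ((x ⬝ᵥ S *ᵥ x : ℤ) : ℝ) := by exact_mod_cast hq
      have h1 : Filter.Tendsto (fun y : ℝ ↦ -(π * y) * ((x ⬝ᵥ S *ᵥ x : ℤ) : ℝ)) Filter.atTop
          Filter.atBot := by
        refine Filter.Tendsto.atBot_mul_const hq' ?_
        exact Filter.tendsto_neg_atTop_atBot.comp
          (Filter.tendsto_id.const_mul_atTop Real.pi_pos)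
      exact h1.comp Filter.tendsto_comap
  · filter_upwards [Filter.preimage_mem_comap (Filter.eventually_ge_atTop (1 : ℝ))] with τ hτ x
    rw [norm_theta_term, Real.exp_le_exp]
    have hq : (0 : ℝ) ≤ ((x ⬝ᵥ S *ᵥ x : ℤ) : ℝ) := by exact_mod_cast quadForm_nonneg hS x
    have hτ' : 1 ≤ τ.im := hτ
    have := mul_le_mul_of_nonneg_right (mul_le_mul_of_nonneg_left hτ' Real.pi_pos.le) hq
    linarith

end ThetaInversion

/-- The coprime pair `±(c, d)`, for `(c, d)` the bottom row of the chosen representative of a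
coset in `Γ∞\SL₂(ℤ)`. -/
def bottomRow (x : Quotient (QuotientGroup.rightRel GammaInf) × ℤˣ) :
    EisensteinSeries.gammaSet 1 1 0 :=
  ⟨fun i ↦ (x.2 : ℤ) * x.1.out 1 i, by
    rw [EisensteinSeries.mem_gammaSet_one, isCoprime_mul_unit_left x.2.isUnit]
    exact ModularGroup.bottom_row_coprime x.1.out⟩

lemma mul_inv_mem_GammaInf_iff (γ δ : SL(2, ℤ)) :
    δ * γ⁻¹ ∈ GammaInf ↔ δ 1 0 * γ 1 1 = δ 1 1 * γ 1 0 := by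
  have : (δ * γ⁻¹ : SL(2, ℤ)) 1 0 = δ 1 0 * γ 1 1 - δ 1 1 * γ 1 0 := by
    simp [Matrix.SpecialLinearGroup.coe_mul, Matrix.SpecialLinearGroup.coe_inv,
      Matrix.adjugate_fin_two, Matrix.mul_apply, Fin.sum_univ_two, sub_eq_add_neg]
  change (δ * γ⁻¹ : SL(2, ℤ)) 1 0 = 0 ↔ _
  rw [this, sub_eq_zero]

lemma bottomRow_bijective : Function.Bijective bottomRow := by
  constructor
  · rintro ⟨q, u⟩ ⟨q', u'⟩ h
    have h' : ∀ i, (u : ℤ) * q.out 1 i = u' * q'.out 1 i := fun i ↦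
      congrFun (congrArg Subtype.val h) i
    have h0 := h' 0
    have h1 := h' 1
    have hq : q = q' := by
      rw [← Quotient.out_eq q, ← Quotient.out_eq q', Quotient.eq, QuotientGroup.rightRel_apply,
        mul_inv_mem_GammaInf_iff]
      refine mul_left_cancel₀ u'.ne_zero ?_
      linear_combination (-q.out 1 1) * h0 + q.out 1 0 * h1
    subst hq
    have hdet := q.out.det_coe
    rw [Matrix.det_fin_two] at hdet
    refine Prod.ext rfl (Units.ext ?_)
    simp only
    linear_combination (-(u : ℤ) + u') * hdet - q.out 0 1 * h0 + q.out 0 0 * h1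
  · rintro ⟨v, hv⟩
    have hv' := (EisensteinSeries.mem_gammaSet_one v).mp hv
    obtain ⟨γ, -, hγ⟩ := ModularGroup.bottom_row_surj (R := ℤ) hv'
    let q : Quotient (QuotientGroup.rightRel GammaInf) := Quotient.mk _ γ
    have hmem : γ * q.out⁻¹ ∈ GammaInf :=
      QuotientGroup.rightRel_apply.mp (Quotient.exact (Quotient.out_eq q))
    generalize hη : γ * q.out⁻¹ = η at hmem
    have hγη : γ = η * q.out := by rw [← hη]; group
    have hη10 : η 1 0 = 0 := hmem
    have hdet : η 1 1 * η 0 0 = 1 := by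
      have hd := η.det_coe
      rw [Matrix.det_fin_two, hη10] at hd
      linarith
    refine ⟨(q, Units.mkOfMulEqOne _ _ hdet), Subtype.ext (funext fun i ↦ ?_)⟩
    have hrow : v i = γ 1 i := congrFun hγ.symm i
    have hrow' : γ 1 i = η 1 1 * q.out 1 i := by
      conv_lhs => rw [hγη]
      rw [Matrix.SpecialLinearGroup.coe_mul, Matrix.mul_apply, Fin.sum_univ_two, hη10]
      simp
    exact (hrow.trans hrow').symm

open EisensteinSeries in
lemma eisSummand_bottomRow {k : ℕ} (hk2 : Even k) (z : UpperHalfPlane)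
    (x : Quotient (QuotientGroup.rightRel GammaInf) × ℤˣ) :
    eisSummand k (bottomRow x) z = jsq z x.1 ^ (-((k : ℤ) / 2)) := by
  obtain ⟨q, u⟩ := x
  obtain ⟨j, rfl⟩ := hk2
  have hj : jsq z q = ((q.out 1 0 : ℂ) * z + q.out 1 1) ^ 2 := by
    conv_lhs => rw [← Quotient.out_eq q]
    rfl
  have hu : ((u : ℤ) : ℂ) ^ 2 = 1 := by
    rcases Int.units_eq_one_or u with rfl | rfl <;> simp
  have hhalf : ((j + j : ℕ) : ℤ) / 2 = j := by omega
  have hrow : ∀ i, (bottomRow (q, u)).1 i = u * q.out 1 i := fun i ↦ rfl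
  simp only [eisSummand, hrow, hj, hhalf]
  rw [zpow_neg, zpow_neg, zpow_natCast, zpow_natCast, ← two_mul, pow_mul]
  congr 2
  push_cast
  linear_combination ((q.out 1 0 : ℂ) * z + q.out 1 1) ^ 2 * hu

open EisensteinSeries in
/-- The sum over `Γ∞\SL₂(ℤ)` is the normalised Eisenstein series of Mathlib. -/
lemma Ewt_eq_E {k : ℕ} (hk : 3 ≤ k) (hk2 : Even k) (z : UpperHalfPlane) :
    Ewt k z = ModularForm.E hk z := by
  have hE : ModularForm.E hk z
      = (1 / 2 : ℂ) * ∑' x : gammaSet 1 1 0, eisSummand k x z := rfl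
  let e := Equiv.ofBijective _ bottomRow_bijective
  have he : ∀ x, eisSummand k (e x) z = jsq z x.1 ^ (-((k : ℤ) / 2)) :=
    eisSummand_bottomRow hk2 z
  have hsum : Summable fun x : Quotient (QuotientGroup.rightRel GammaInf) × ℤˣ ↦
      jsq z x.1 ^ (-((k : ℤ) / 2)) := by
    have hs : Summable fun x : gammaSet 1 1 0 ↦ eisSummand k x z :=
      (summable_eisSummand hk z).subtype _
    exact (e.summable_iff.mpr hs).congr he
  have htsum : ∑' x : gammaSet 1 1 0, eisSummand k x z
      = ∑' x : Quotient (QuotientGroup.rightRel GammaInf) × ℤˣ,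
        jsq z x.1 ^ (-((k : ℤ) / 2)) := by
    rw [← e.tsum_eq fun x : gammaSet 1 1 0 ↦ eisSummand k x z]
    exact tsum_congr he
  rw [hE, htsum, hsum.tsum_prod, Ewt, ← tsum_mul_left]
  refine tsum_congr fun q ↦ ?_
  rw [tsum_fintype]
  simp

/-- The unnormalised Eisenstein series `∑ (cτ+d)⁻ᵏ` over all pairs of integers. -/
def eisTsum (k : ℕ) (τ : ℂ) : ℂ := ∑' v : ℤ × ℤ, ((v.1 * τ + v.2) ^ k)⁻¹

lemma summable_eisTsum {k : ℕ} (hk : 3 ≤ k) {τ : ℂ} (hτ : 0 < τ.im) :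
    Summable fun v : ℤ × ℤ ↦ (((v.1 : ℂ) * τ + v.2) ^ k)⁻¹ := by
  simpa [EisensteinSeries.eisSummand] using summable_prod_eisSummand hk ⟨τ, hτ⟩

lemma Ewt_eq_eisTsum {k : ℕ} (hk : 3 ≤ k) (hk2 : Even k) {τ : ℂ} (hτ : 0 < τ.im) :
    Ewt k τ = (2 * riemannZeta k)⁻¹ * eisTsum k τ := by
  have hz : riemannZeta k ≠ 0 := riemannZeta_ne_zero_of_one_lt_re <| by norm_cast; omega
  have h := tsum_eisSummand_eq_riemannZeta_mul_eisensteinSeries hk ⟨τ, hτ⟩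
  have hE : ModularForm.E hk ⟨τ, hτ⟩
      = (1 / 2 : ℂ) * eisensteinSeries (N := 1) 0 k ⟨τ, hτ⟩ := rfl
  rw [← (finTwoArrowEquiv ℤ).symm.tsum_eq] at h
  have h' : eisTsum k τ = riemannZeta k * eisensteinSeries (N := 1) 0 k ⟨τ, hτ⟩ := by
    rw [← h, eisTsum]
    exact tsum_congr fun v ↦ by simp [EisensteinSeries.eisSummand]
  rw [show Ewt k τ = ModularForm.E hk ⟨τ, hτ⟩ from Ewt_eq_E hk hk2 ⟨τ, hτ⟩, h', hE]
  field_simp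

lemma eisTsum_add_one (k : ℕ) (τ : ℂ) : eisTsum k (τ + 1) = eisTsum k τ := by
  let e : ℤ × ℤ ≃ ℤ × ℤ :=
    { toFun := fun v ↦ (v.1, v.2 + v.1)
      invFun := fun v ↦ (v.1, v.2 - v.1)
      left_inv := fun v ↦ by simp
      right_inv := fun v ↦ by simp }
  rw [eisTsum, eisTsum, ← e.tsum_eq fun v : ℤ × ℤ ↦ (((v.1 : ℂ) * τ + v.2) ^ k)⁻¹]
  refine tsum_congr fun v ↦ ?_
  simp only [e, Equiv.coe_fn_mk]
  push_cast
  congr 2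
  ring

lemma card_filter_dvd_sub_mul {p : ℕ} (hp : p.Prime) (c e : ℤ) :
    (if (p : ℤ) ∣ c then 1 else 0)
      + ∑ b ∈ Finset.range p, (if (p : ℤ) ∣ e - c * b then (1 : ℂ) else 0)
      = 1 + p * if (p : ℤ) ∣ c ∧ (p : ℤ) ∣ e then 1 else 0 := by
  by_cases hc : (p : ℤ) ∣ c
  · have : ∀ b : ℕ, (p : ℤ) ∣ e - c * b ↔ (p : ℤ) ∣ e := fun b ↦
      dvd_sub_left (hc.mul_right _)
    by_cases he : (p : ℤ) ∣ e <;> simp [this, hc, he]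
  · have : Fact p.Prime := ⟨hp⟩
    have hc' : (c : ZMod p) ≠ 0 := by rwa [Ne, ZMod.intCast_zmod_eq_zero_iff_dvd]
    have : ∀ b ∈ Finset.range p, ((p : ℤ) ∣ e - c * b ↔ b = ((e : ZMod p) / c).val) := by
      intro b hb
      rw [← ZMod.intCast_zmod_eq_zero_iff_dvd]
      push_cast
      rw [sub_eq_zero, eq_comm, mul_comm, ← eq_div_iff hc']
      constructor
      · intro h
        rw [← h, ZMod.val_natCast_of_lt (Finset.mem_range.mp hb)]
      · rintro h
        rw [h]; simp
    rw [Finset.sum_congr rfl fun b hb ↦ by rw [if_congr (this b hb) rfl rfl],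
      Finset.sum_ite_eq', if_pos (Finset.mem_range.mpr (ZMod.val_lt _))]
    simp [hc]

/-- Reindexing along an injective map turns a sum into a sum restricted to the range. -/
lemma tsum_comp_eq_tsum_ite {α β : Type*} (h : β → ℂ) {i : α → β} (hi : Function.Injective i)
    (P : β → Prop) [DecidablePred P] (hP : ∀ y, P y ↔ y ∈ Set.range i) :
    ∑' x, h (i x) = ∑' y, if P y then h y else 0 := by
  rw [← hi.tsum_eq (f := fun y ↦ if P y then h y else 0)]
  · refine tsum_congr fun x ↦ ?_
    rw [if_pos ((hP _).mpr ⟨x, rfl⟩)]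
  · intro y hy
    by_contra hne
    exact hy (if_neg fun h ↦ hne ((hP y).mp h))

/-- The Hecke operator `T_p` on 1-periodic functions, in weight `k`. -/
def heckeOp (p k : ℕ) (f : ℂ → ℂ) (τ : ℂ) : ℂ :=
  (p : ℂ) ^ k / p * f (p * τ) + (p : ℂ)⁻¹ * ∑ b ∈ Finset.range p, f ((τ + b) / p)

/-- The Eisenstein series is an eigenfunction of `T_p`. -/
lemma heckeOp_eisTsum {p : ℕ} (hp : p.Prime) {k : ℕ} (hk : 3 ≤ k) {τ : ℂ} (hτ : 0 < τ.im) :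
    heckeOp p k (eisTsum k) τ = ((p : ℂ) ^ k / p + 1) * eisTsum k τ := by
  have hp0 : (p : ℂ) ≠ 0 := by exact_mod_cast hp.ne_zero
  let h : ℤ × ℤ → ℂ := fun v ↦ (((v.1 : ℂ) * τ + v.2) ^ k)⁻¹
  have hsum : Summable h := summable_eisTsum hk hτ
  have hite : ∀ (P : ℤ × ℤ → Prop) [DecidablePred P], Summable fun v ↦ if P v then h v else 0 :=
    fun P _ ↦ (hsum.indicator {v | P v}).congr fun v ↦ by simp [Set.indicator_apply]
  have hfirst : eisTsum k (p * τ) = ∑' v, if (p : ℤ) ∣ v.1 then h v else 0 := by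
    rw [← tsum_comp_eq_tsum_ite h (i := fun v : ℤ × ℤ ↦ ((p : ℤ) * v.1, v.2))]
    · refine tsum_congr fun v ↦ ?_
      simp only [h]
      push_cast
      congr 2
      ring
    · rintro ⟨a, b⟩ ⟨c, d⟩ hv
      simpa [hp.ne_zero] using hv
    · rintro ⟨a, b⟩
      constructor
      · rintro ⟨c, rfl⟩
        exact ⟨(c, b), rfl⟩
      · rintro ⟨⟨c, d⟩, hv⟩
        exact ⟨c, (congrArg Prod.fst hv).symm⟩
  have hsecond : ∀ b : ℕ, eisTsum k ((τ + b) / p)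
      = (p : ℂ) ^ k * ∑' v : ℤ × ℤ, if (p : ℤ) ∣ v.2 - v.1 * b then h v else 0 := by
    intro b
    rw [← tsum_comp_eq_tsum_ite h (i := fun v : ℤ × ℤ ↦ (v.1, v.1 * b + p * v.2)), eisTsum,
      ← tsum_mul_left]
    · refine tsum_congr fun v ↦ ?_
      simp only [h]
      push_cast
      rw [← div_eq_mul_inv, ← div_pow, ← inv_pow]
      congr 1
      rw [← inv_div]
      field_simp
      ring
    · rintro ⟨a, b⟩ ⟨c, d⟩ hv
      obtain ⟨rfl, h2⟩ := Prod.mk.inj hv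
      simpa [hp.ne_zero] using h2
    · rintro ⟨a, e⟩
      constructor
      · rintro ⟨c, hc⟩
        exact ⟨(a, c), Prod.ext rfl (by simp only at hc ⊢; linarith)⟩
      · rintro ⟨⟨c, d⟩, hv⟩
        obtain ⟨rfl, rfl⟩ := Prod.mk.inj hv
        exact ⟨d, by ring⟩
  have hthird : ∑' v, (if (p : ℤ) ∣ v.1 ∧ (p : ℤ) ∣ v.2 then h v else 0)
      = ((p : ℂ) ^ k)⁻¹ * eisTsum k τ := by
    rw [← tsum_comp_eq_tsum_ite h (i := fun v : ℤ × ℤ ↦ ((p : ℤ) * v.1, (p : ℤ) * v.2)),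
      eisTsum, ← tsum_mul_left]
    · refine tsum_congr fun v ↦ ?_
      simp only [h]
      push_cast
      rw [← mul_inv, ← mul_pow]
      congr 2
      ring
    · rintro ⟨a, b⟩ ⟨c, d⟩ hv
      simpa [hp.ne_zero] using hv
    · rintro ⟨a, b⟩
      constructor
      · rintro ⟨⟨c, rfl⟩, ⟨d, rfl⟩⟩
        exact ⟨(c, d), rfl⟩
      · rintro ⟨⟨c, d⟩, hv⟩
        obtain ⟨rfl, rfl⟩ := Prod.mk.inj hv
        exact ⟨⟨c, rfl⟩, ⟨d, rfl⟩⟩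
  have hcount : (∑' v, if (p : ℤ) ∣ v.1 then h v else 0)
      + ∑ b ∈ Finset.range p, ∑' v : ℤ × ℤ, (if (p : ℤ) ∣ v.2 - v.1 * b then h v else 0)
      = eisTsum k τ
        + p * ∑' v, (if (p : ℤ) ∣ v.1 ∧ (p : ℤ) ∣ v.2 then h v else 0) := by
    rw [← Summable.tsum_finsetSum fun b _ ↦ hite _,
      ← (hite _).tsum_add (summable_sum fun b _ ↦ hite _), eisTsum, ← tsum_mul_left,
      ← hsum.tsum_add ((hite _).mul_left _)]
    refine tsum_congr fun v ↦ ?_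
    have := congrArg (· * h v) (card_filter_dvd_sub_mul hp v.1 v.2)
    simpa only [add_mul, Finset.sum_mul, mul_assoc, ite_mul, one_mul, zero_mul] using this
  rw [heckeOp, hfirst, Finset.sum_congr rfl fun b _ ↦ hsecond b, ← Finset.mul_sum]
  rw [hthird] at hcount
  have hpk : (p : ℂ) ^ k ≠ 0 := pow_ne_zero _ hp0
  field_simp at hcount ⊢
  linear_combination hcount

lemma sum_range_mul_eq {M : Type*} [AddCommMonoid M] (F : ℕ → M) (p n : ℕ) :
    ∑ j ∈ Finset.range (p * n), F j
      = ∑ b ∈ Finset.range p, ∑ c ∈ Finset.range n, F (b + p * c) := by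
  induction n with
  | zero => simp
  | succ n ih =>
    rw [mul_add_one, Finset.sum_range_add, ih]
    simp only [Finset.sum_range_succ _ n, Finset.sum_add_distrib]
    simp only [add_comm]

/-- For 1-periodic functions, `T_{p²}`-type operator `heckeSq` is `T_p² - pᵏ⁻¹`. -/
lemma heckeSq_eq_of_heckeOp_eq {p : ℕ} (hp : p ≠ 0) {k : ℕ} {f : ℂ → ℂ} {μ : ℂ}
    (hper : ∀ τ, f (τ + 1) = f τ)
    (hf : ∀ τ : ℂ, 0 < τ.im → heckeOp p k f τ = μ * f τ) {τ : ℂ} (hτ : 0 < τ.im) :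
    heckeSq p k f τ = (μ ^ 2 - (p : ℂ) ^ k / p) * f τ := by
  have hp0 : (p : ℂ) ≠ 0 := by exact_mod_cast hp
  have hppos : 0 < p := Nat.pos_of_ne_zero hp
  have hperN : ∀ (b : ℕ) τ, f (τ + b) = f τ := by
    intro b
    induction b with
    | zero => simp
    | succ b ih =>
      intro τ
      rw [Nat.cast_add_one, ← add_assoc, hper, ih]
  have hmul : 0 < ((p : ℂ) * τ).im := by
    rw [← Complex.ofReal_natCast, Complex.im_ofReal_mul]
    exact mul_pos (by exact_mod_cast hppos) hτ
  have hdiv : ∀ b : ℕ, 0 < ((τ + b) / p).im := by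
    intro b
    rw [Complex.div_natCast_im]
    simpa using div_pos hτ (by exact_mod_cast hppos)
  have h1 := hf _ hmul
  have h2 : ∑ b ∈ Finset.range p, heckeOp p k f ((τ + b) / p)
      = μ * ∑ b ∈ Finset.range p, f ((τ + b) / p) := by
    rw [Finset.mul_sum]
    exact Finset.sum_congr rfl fun b _ ↦ hf _ (hdiv b)
  have h3 := hf _ hτ
  have hA : ∑ b ∈ Finset.range p, f (((p : ℂ) * τ + b) / p)
      = ∑ b ∈ Finset.range p, f (τ + b / p) :=
    Finset.sum_congr rfl fun b _ ↦ by
      congr 1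
      field_simp
  have hB : ∑ b ∈ Finset.range p, f ((p : ℂ) * ((τ + b) / p)) = p * f τ := by
    rw [Finset.sum_congr rfl fun b _ ↦ by rw [mul_div_cancel₀ _ hp0, hperN b τ]]
    simp
  have hC : ∑ b ∈ Finset.range p, ∑ c ∈ Finset.range p, f (((τ + b) / p + c) / p)
      = ∑ j ∈ Finset.range (p ^ 2), f ((τ + j) / (p : ℂ) ^ 2) := by
    rw [sq p, sum_range_mul_eq]
    refine Finset.sum_congr rfl fun b _ ↦ Finset.sum_congr rfl fun c _ ↦ ?_
    congr 1
    push_cast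
    field_simp
    ring
  have hD : (p : ℂ) * ((p : ℂ) * τ) = (p : ℂ) ^ 2 * τ := by ring
  simp only [heckeOp, Finset.sum_add_distrib, ← Finset.mul_sum, hB, hC] at h2
  simp only [heckeOp, hA, hD] at h1 h3
  rw [heckeSq]
  field_simp at h1 h2 h3 ⊢
  linear_combination (p : ℂ) ^ k * h1 + h2 + p * μ * h3

lemma heckeSq_congr {p : ℕ} (hp : p ≠ 0) (k : ℕ) {f g : ℂ → ℂ}
    (hfg : ∀ τ : ℂ, 0 < τ.im → f τ = g τ) {τ : ℂ} (hτ : 0 < τ.im) :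
    heckeSq p k f τ = heckeSq p k g τ := by
  have hp' : (0 : ℝ) < (p : ℝ) ^ 2 := by positivity
  have hcast : (p : ℂ) ^ 2 = (((p : ℝ) ^ 2 : ℝ) : ℂ) := by push_cast; rfl
  have h1 : ∀ b : ℕ, f ((τ + b) / (p : ℂ) ^ 2) = g ((τ + b) / (p : ℂ) ^ 2) := fun b ↦ by
    refine hfg _ ?_
    rw [hcast, Complex.div_ofReal_im]
    simpa using div_pos hτ hp'
  have h2 : ∀ b : ℕ, f (τ + b / p) = g (τ + b / p) := fun b ↦ by
    refine hfg _ ?_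
    simpa [Complex.div_natCast_im] using hτ
  have h3 : f ((p : ℂ) ^ 2 * τ) = g ((p : ℂ) ^ 2 * τ) := by
    refine hfg _ ?_
    rw [hcast, Complex.im_ofReal_mul]
    exact mul_pos hp' hτ
  simp only [heckeSq, h1, h2, h3]

lemma heckeSq_const_mul (p k : ℕ) (c : ℂ) (f : ℂ → ℂ) (τ : ℂ) :
    heckeSq p k (fun z ↦ c * f z) τ = c * heckeSq p k f τ := by
  simp only [heckeSq, ← Finset.mul_sum]
  ring

lemma heckeSq_sub (p k : ℕ) (f g : ℂ → ℂ) (τ : ℂ) :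
    heckeSq p k (fun z ↦ f z - g z) τ = heckeSq p k f τ - heckeSq p k g τ := by
  simp only [heckeSq, Finset.sum_sub_distrib]
  ring

lemma heckeSq_Ewt {p : ℕ} (hp : p.Prime) {k : ℕ} (hk : 3 ≤ k) (hk2 : Even k) {τ : ℂ}
    (hτ : 0 < τ.im) :
    heckeSq p k (Ewt k) τ
      = (((p : ℂ) ^ k) ^ 2 / (p : ℂ) ^ 2 + (p : ℂ) ^ k / p + 1) * Ewt k τ := by
  rw [heckeSq_congr hp.ne_zero k (fun z hz ↦ Ewt_eq_eisTsum hk hk2 hz) hτ, heckeSq_const_mul,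
    heckeSq_eq_of_heckeOp_eq hp.ne_zero (eisTsum_add_one k)
      (fun z hz ↦ heckeOp_eisTsum hp hk hz) hτ, Ewt_eq_eisTsum hk hk2 hτ]
  ring

open UpperHalfPlane Filter ModularForm in
/-- A holomorphic function on the upper half-plane which is invariant under the generators of
`SL₂(ℤ)` and has a limit at `i∞` is a modular form of level one. -/
def levelOneForm {k : ℕ} {f : ℂ → ℂ} {c : ℂ} (hper : ∀ τ : ℂ, f (τ + 1) = f τ)
    (hinv : ∀ τ : ℂ, 0 < τ.im → f (-1 / τ) = τ ^ k * f τ)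
    (hdiff : DifferentiableOn ℂ f {τ | 0 < τ.im})
    (hlim : Tendsto f (comap Complex.im atTop) (nhds c)) : ModularForm 𝒮ℒ k :=
  have hslash : ∀ γ : SL(2, ℤ), (fun z : UpperHalfPlane ↦ f z) ∣[(k : ℤ)] γ =
      fun z : UpperHalfPlane ↦ f z := by
    refine SlashInvariantForm.slash_action_generators_SL2Z ?_ ?_
    · ext z
      rw [ModularForm.SL_slash_apply, UpperHalfPlane.modular_S_smul, ModularGroup.denom_S, zpow_neg,
        zpow_natCast, mul_inv_eq_iff_eq_mul₀ (pow_ne_zero _ z.ne_zero), mul_comm]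
      have := hinv z z.im_pos
      rwa [neg_div, one_div, ← inv_neg] at this
    · ext z
      rw [ModularForm.SL_slash_apply, UpperHalfPlane.modular_T_smul]
      have hden : denom (ModularGroup.T : GL (Fin 2) ℝ) z = 1 := by
        rw [ModularGroup.denom_apply]
        simp [ModularGroup.T]
      rw [hden]
      simp [add_comm, hper]
  { toFun := fun z ↦ f z
    slash_action_eq' := by
      rintro _ ⟨γ, rfl⟩
      exact hslash γ
    holo' := by
      rw [UpperHalfPlane.mdifferentiable_iff]
      refine hdiff.congr fun z hz ↦ ?_
      simp [UpperHalfPlane.ofComplex_apply_of_im_pos hz]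
    bdd_at_cusps' := by
      intro c hc
      rw [OnePoint.isBoundedAt_iff_forall_SL2Z hc]
      intro γ _
      have := (hlim.comp UpperHalfPlane.tendsto_coe_atImInfty).isBigO_one ℝ
      rw [hslash]
      exact this }

open UpperHalfPlane Filter in
/-- The difference of a level one form and a multiple of the Eisenstein series with the same
limit at `i∞` satisfies the Hecke bound. -/
lemma exists_bound_sub_Ewt {j : ℕ} (hk : 3 ≤ 2 * j) {f : ℂ → ℂ} {c : ℂ}
    (hper : ∀ τ : ℂ, f (τ + 1) = f τ)
    (hinv : ∀ τ : ℂ, 0 < τ.im → f (-1 / τ) = τ ^ (2 * j) * f τ)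
    (hdiff : DifferentiableOn ℂ f {τ | 0 < τ.im})
    (hlim : Tendsto f (comap Complex.im atTop) (nhds c)) :
    ∃ C : ℝ, ∀ τ : ℂ, 0 < τ.im → ‖f τ - c * Ewt (2 * j) τ‖ ≤ C / τ.im ^ j := by
  let F := levelOneForm hper hinv hdiff hlim
  have hF : ∀ z : UpperHalfPlane, F z = f z := fun z ↦ rfl
  have hc : (qExpansion 1 F).coeff 0 = c := by
    rw [qExpansion_coeff_zero one_pos
      (ModularFormClass.analyticAt_cuspFunction_zero _ one_pos one_mem_strictPeriods_SL)
      (SlashInvariantFormClass.periodic_comp_ofComplex _ one_mem_strictPeriods_SL)]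
    exact (hlim.comp tendsto_coe_atImInfty).limUnder_eq
  obtain ⟨g, hg⟩ := ModularForm.sub_smul_isCuspForm F (ModularForm.E hk)
    (EisensteinSeries.E_qExpansion_coeff_zero hk (even_two_mul j))
  obtain ⟨C, hC⟩ := CuspFormClass.exists_bound g
  refine ⟨C, fun τ hτ ↦ ?_⟩
  have hval : g ⟨τ, hτ⟩ = f τ - c * Ewt (2 * j) τ := by
    have h1 := DFunLike.congr_fun hg ⟨τ, hτ⟩
    rw [CuspForm.toModularFormₗ_apply, hc] at h1
    rw [h1, show Ewt (2 * j) τ = ModularForm.E hk ⟨τ, hτ⟩ from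
      Ewt_eq_E hk (even_two_mul j) ⟨τ, hτ⟩]
    rfl
  have h2 := hC ⟨τ, hτ⟩
  rw [hval] at h2
  have h3 : (((2 * j : ℕ) : ℤ) : ℝ) / 2 = j := by push_cast; ring
  rwa [h3, Real.rpow_natCast] at h2

lemma norm_heckeSq_le {p : ℕ} (hp : p ≠ 0) {j : ℕ} {g : ℂ → ℂ} {C : ℝ}
    (hg : ∀ τ : ℂ, 0 < τ.im → ‖g τ‖ ≤ C / τ.im ^ j) {τ : ℂ} (hτ : 0 < τ.im) :
    ‖heckeSq p (2 * j) g τ‖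
      ≤ ((p : ℝ) ^ (2 * j) + (p : ℝ) ^ (2 * j) / p + (p : ℝ) ^ (2 * j) / (p : ℝ) ^ 2)
        * (C / τ.im ^ j) := by
  have hp0 : (0 : ℝ) < p := by exact_mod_cast Nat.pos_of_ne_zero hp
  have hp' : (0 : ℝ) < (p : ℝ) ^ 2 := by positivity
  have hcast : (p : ℂ) ^ 2 = (((p : ℝ) ^ 2 : ℝ) : ℂ) := by push_cast; rfl
  have h1 : ∀ b ∈ Finset.range (p ^ 2), ‖g ((τ + b) / (p : ℂ) ^ 2)‖
      ≤ (p : ℝ) ^ (2 * j) * (C / τ.im ^ j) := fun b _ ↦ by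
    have him : ((τ + b) / (p : ℂ) ^ 2).im = τ.im / (p : ℝ) ^ 2 := by
      rw [hcast, Complex.div_ofReal_im]
      simp
    refine (hg _ (by rw [him]; positivity)).trans_eq ?_
    rw [him, div_pow, pow_mul]
    field_simp
  have h2 : ∀ b ∈ Finset.range p, ‖g (τ + b / p)‖ ≤ C / τ.im ^ j := fun b _ ↦ by
    have him : (τ + b / p).im = τ.im := by simp [Complex.div_natCast_im]
    exact (hg _ (by rwa [him])).trans_eq (by rw [him])
  have h3 : ‖g ((p : ℂ) ^ 2 * τ)‖ ≤ ((p : ℝ) ^ (2 * j))⁻¹ * (C / τ.im ^ j) := by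
    have him : ((p : ℂ) ^ 2 * τ).im = (p : ℝ) ^ 2 * τ.im := by
      rw [hcast, Complex.im_ofReal_mul]
    refine (hg _ (by rw [him]; positivity)).trans_eq ?_
    rw [him, mul_pow, pow_mul]
    field_simp
  have h1' := norm_sum_le_of_le _ h1
  have h2' := norm_sum_le_of_le _ h2
  rw [Finset.sum_const, Finset.card_range, nsmul_eq_mul] at h1' h2'
  push_cast at h1'
  calc ‖heckeSq p (2 * j) g τ‖
      ≤ ((p : ℝ) ^ 2)⁻¹ * ((p : ℝ) ^ 2 * ((p : ℝ) ^ (2 * j) * (C / τ.im ^ j)))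
        + (p : ℝ) ^ (2 * j) / (p : ℝ) ^ 2 * (p * (C / τ.im ^ j))
        + ((p : ℝ) ^ (2 * j)) ^ 2 / (p : ℝ) ^ 2 * (((p : ℝ) ^ (2 * j))⁻¹ * (C / τ.im ^ j)) := by
        refine norm_add₃_le.trans ?_
        simp only [norm_mul, norm_div, norm_inv, norm_pow, Complex.norm_natCast]
        gcongr
    _ = _ := by field_simp

/-- A function with the Hecke bound cannot be an eigenfunction with a large eigenvalue. -/
lemma eq_zero_of_heckeSq_eq {p : ℕ} (hp : p ≠ 0) {j : ℕ} {g : ℂ → ℂ} {C : ℝ} {l : ℂ}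
    (hg : ∀ τ : ℂ, 0 < τ.im → ‖g τ‖ ≤ C / τ.im ^ j)
    (hl : (p : ℝ) ^ (2 * j) + (p : ℝ) ^ (2 * j) / p + (p : ℝ) ^ (2 * j) / (p : ℝ) ^ 2 < ‖l‖)
    (heig : ∀ τ : ℂ, 0 < τ.im → heckeSq p (2 * j) g τ = l * g τ) {τ : ℂ} (hτ : 0 < τ.im) :
    g τ = 0 := by
  set B : ℝ := (p : ℝ) ^ (2 * j) + (p : ℝ) ^ (2 * j) / p + (p : ℝ) ^ (2 * j) / (p : ℝ) ^ 2
    with hB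
  have hB0 : 0 ≤ B := by positivity
  have hl0 : 0 < ‖l‖ := hB0.trans_lt hl
  have hiter : ∀ n : ℕ, ∀ τ : ℂ, 0 < τ.im → ‖g τ‖ ≤ (B / ‖l‖) ^ n * C / τ.im ^ j := by
    intro n
    induction n with
    | zero => simpa using hg
    | succ n ih =>
      intro τ hτ
      have h := norm_heckeSq_le hp ih hτ
      rw [heig τ hτ, norm_mul, mul_comm, ← le_div_iff₀ hl0] at h
      exact h.trans_eq (by rw [pow_succ]; ring)
  have hlim : Filter.Tendsto (fun n : ℕ ↦ (B / ‖l‖) ^ n * C / τ.im ^ j) Filter.atTop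
      (nhds (0 * C / τ.im ^ j)) :=
    ((tendsto_pow_atTop_nhds_zero_of_lt_one (by positivity)
      ((div_lt_one hl0).mpr hl)).mul_const C).div_const _
  rw [zero_mul, zero_div] at hlim
  exact norm_le_zero_iff.mp (ge_of_tendsto' hlim fun n ↦ hiter n τ hτ)

/-- Siegel's formula in degree 1: for `8 ∣ m` and `R` a complete set of representatives of
the equivalence classes of positive definite even unimodular `m × m` matrices,
`∑_{S ∈ R} (1/g_S) θ_S(τ) = M_m E_{m/2}(τ)` on `ℍ`, where `M_m = ∑_{S ∈ R} 1/g_S` and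
`E_{m/2}(τ) = ∑_{γ ∈ Γ∞\SL₂(ℤ)} j(γ,τ)^{-m/2}`. -/
theorem siegel_formula_degree_one (m : ℕ) (hm : 0 < m) (hm8 : 8 ∣ m)
    (R : Finset (Matrix (Fin m) (Fin m) ℤ))
    (hR : ∀ S ∈ R, IsPosDefEvenUnimodular S)
    (huniq : ∀ S ∈ R, ∀ S' ∈ R, MatEquiv S S' → S = S')
    (hrep : ∀ T : Matrix (Fin m) (Fin m) ℤ, IsPosDefEvenUnimodular T → ∃ S ∈ R, MatEquiv S T) :
    ∀ τ ∈ UHP,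
      ∑ S ∈ R, (autCard S : ℂ)⁻¹ * thetaSeries S τ
        = (∑ S ∈ R, (autCard S : ℂ)⁻¹) * Ewt (m / 2) τ := by
  intro τ hτ
  obtain ⟨n, rfl⟩ := hm8
  have hhalf : 8 * n / 2 = 2 * (2 * n) := by omega
  have hmk : 8 * n = 2 * (2 * (2 * n)) := by ring
  have hk4 : 4 ∣ 2 * (2 * n) := ⟨n, by ring⟩
  have hk : 3 ≤ 2 * (2 * n) := by omega
  rw [hhalf]
  have : Fact (Nat.Prime 3) := ⟨Nat.prime_three⟩
  set f : ℂ → ℂ := fun z ↦ ∑ S ∈ R, (autCard S : ℂ)⁻¹ * thetaSeries S z with hf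
  set M : ℂ := ∑ S ∈ R, (autCard S : ℂ)⁻¹ with hM
  obtain ⟨C, hC⟩ := exists_bound_sub_Ewt (j := 2 * n) (f := f) (c := M) hk
    (fun z ↦ Finset.sum_congr rfl fun S hS ↦ by rw [thetaSeries_add_one (hR S hS)])
    (fun z hz ↦ by
      simp only [hf, Finset.mul_sum]
      refine Finset.sum_congr rfl fun S hS ↦ ?_
      rw [thetaSeries_neg_one_div (hR S hS) hmk hk4 hz]
      ring)
    (DifferentiableOn.fun_sum fun S hS ↦
      (differentiableOn_thetaSeries (hR S hS).2.1).const_mul _)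
    (by
      have : M = ∑ S ∈ R, (autCard S : ℂ)⁻¹ * 1 := by simp [hM]
      rw [this]
      exact tendsto_finsetSum _ fun S hS ↦ (tendsto_thetaSeries (hR S hS).2.1).const_mul _)
  refine sub_eq_zero.mp (eq_zero_of_heckeSq_eq (p := 3) (by norm_num)
    (g := fun z ↦ f z - M * Ewt (2 * (2 * n)) z)
    (l := (((3 : ℕ) : ℂ) ^ (2 * (2 * n))) ^ 2 / ((3 : ℕ) : ℂ) ^ 2
      + ((3 : ℕ) : ℂ) ^ (2 * (2 * n)) / (3 : ℕ) + 1) hC ?_ (fun z hz ↦ ?_) hτ)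
  · have hP : (81 : ℝ) ≤ 3 ^ (2 * (2 * n)) :=
      calc (81 : ℝ) = 3 ^ 4 := by norm_num
        _ ≤ _ := pow_le_pow_right₀ (by norm_num) (by omega)
    have hnorm : (((3 : ℕ) : ℂ) ^ (2 * (2 * n))) ^ 2 / ((3 : ℕ) : ℂ) ^ 2
        + ((3 : ℕ) : ℂ) ^ (2 * (2 * n)) / (3 : ℕ) + 1
        = (((3 ^ (2 * (2 * n)) : ℝ) ^ 2 / 3 ^ 2 + 3 ^ (2 * (2 * n)) / 3 + 1 : ℝ) : ℂ) := by
      push_cast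
      ring
    rw [hnorm, Complex.norm_of_nonneg (by positivity)]
    push_cast
    nlinarith
  · rw [heckeSq_sub, heckeSq_const_mul, heckeSq_Ewt Nat.prime_three hk (even_two_mul _) hz,
      heckeSq_sum_thetaSeries (by norm_num) hmk (even_two_mul _) hR huniq hrep hz]
    ring

end
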